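/- arXiv:1004.5373 — 3 statements merged into one kernel-verified Lean document; each statement's English description precedes it below -/
import Mathlib

section
/- Fix n ≥ 1, m ≥ k ≥ 0 and a planting A=(a_1,…,a_n) with Σ_i a_i = k. Under the planted distribution PL_A(m,n), the statistic H_A(Z) = Σ_i a_i q_i has expectation E[H_A] = V(A)·n²/m and variance Var[H_A] = (m−k)·V(A)·n²/m² exactly. -/
/-!
Centre the planting: `b i = a i - k/n` has mean zero over the bins. Writing `z = a + y` with `y`
uniform multinomial with `N = m - k` trials, the statistic becomes

  `H_A(z) = (n/m) (Σ a i ^ 2 - k ^ 2 / n) + (n/m) Σ b i * y i`,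

so only the first two moments of the linear form `Σ b i * y i` are needed. By the multinomial
theorem its moment generating function is `((1/n) Σ exp (t * b i)) ^ N` (`st_mgf`), and
differentiating twice at `t = 0` gives mean `0` and second moment `N * (1/n) Σ b i ^ 2 = N * V(A)`.
The infinite sums over configurations are reduced to finite ones by `tsum_plProb`.
-/

open Finset Filter Topology

/-- Probability of configuration `z` of `m` balls in `n` bins under the standard
(uniform multinomial) distribution ST(m,n). -/
noncomputable def stProb (n m : ℕ) (z : Fin n → ℕ) : ℝ :=
  if ∑ i, z i = m then
    ((Nat.factorial m : ℝ) / ∏ i, (Nat.factorial (z i) : ℝ)) * ((n : ℝ))⁻¹ ^ m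
  else 0

/-- Probability of configuration `z` of `m` balls in `n` bins under the planted
distribution PL_A(m,n) with planting `a`. -/
noncomputable def plProb (n m : ℕ) (a : Fin n → ℕ) (z : Fin n → ℕ) : ℝ :=
  if (∑ i, z i = m) ∧ (∀ i, a i ≤ z i) then
    ((Nat.factorial (m - ∑ i, a i) : ℝ) / ∏ i, (Nat.factorial (z i - a i) : ℝ)) *
      ((n : ℝ))⁻¹ ^ (m - ∑ i, a i)
  else 0

/-- Expectation of a statistic `T` with respect to a probability function `p` on
configurations. -/
noncomputable def expec {n : ℕ} (p : (Fin n → ℕ) → ℝ) (T : (Fin n → ℕ) → ℝ) : ℝ :=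
  ∑' z : Fin n → ℕ, p z * T z

/-- Variance of a statistic `T` with respect to a probability function `p`. -/
noncomputable def varOf {n : ℕ} (p : (Fin n → ℕ) → ℝ) (T : (Fin n → ℕ) → ℝ) : ℝ :=
  ∑' z : Fin n → ℕ, p z * (T z - expec p T) ^ 2

/-- Probability of a set `s` of configurations with respect to a probability
function `p`. -/
noncomputable def probOf {n : ℕ} (p : (Fin n → ℕ) → ℝ) (s : Set (Fin n → ℕ)) : ℝ :=
  ∑' z : Fin n → ℕ, Set.indicator s p z

/-- `V(A) = (Σ_i a_i²)/n − k²/n²` where `k = Σ_i a_i`. -/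
noncomputable def plantV (n : ℕ) (a : Fin n → ℕ) : ℝ :=
  (∑ i, (a i : ℝ) ^ 2) / n - ((∑ i, (a i : ℝ)) / n) ^ 2

/-- `q_i = (n/m)(z_i − m/n)`. -/
noncomputable def qStat (n m : ℕ) (z : Fin n → ℕ) (i : Fin n) : ℝ :=
  ((n : ℝ) / m) * ((z i : ℝ) - (m : ℝ) / n)

/-- The Hilly-regime statistic `H_A(Z) = Σ_i a_i q_i`. -/
noncomputable def HStat (n m : ℕ) (a : Fin n → ℕ) (z : Fin n → ℕ) : ℝ :=
  ∑ i, (a i : ℝ) * qStat n m z i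

/-- The Flat-regime statistic `F_A(Z) = Σ_i a_i q_i²`. -/
noncomputable def FStat (n m : ℕ) (a : Fin n → ℕ) (z : Fin n → ℕ) : ℝ :=
  ∑ i, (a i : ℝ) * qStat n m z i ^ 2

/-- The Intermediate-regime statistic `I_A(Z) = Σ_i a_i q_i − (1/2) Σ_i a_i q_i²`. -/
noncomputable def IStat (n m : ℕ) (a : Fin n → ℕ) (z : Fin n → ℕ) : ℝ :=
  HStat n m a z - (1/2) * FStat n m a z

/-- The standard normal cumulative distribution function `Φ`. -/
noncomputable def stdNormalCDF (x : ℝ) : ℝ :=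
  ∫ t in Set.Iic x, Real.exp (-t ^ 2 / 2) / Real.sqrt (2 * Real.pi)

/-- Total variation distance `TV_A(m,n)` between ST(m,n) and PL_A(m,n). -/
noncomputable def tvDist (n m : ℕ) (a : Fin n → ℕ) : ℝ :=
  (1/2) * ∑' z : Fin n → ℕ, |stProb n m z - plProb n m a z|

/-- The Flat regime: `n^{3/2} V(A)/k → 0` and `m/(k n^{1/2}) → c`. -/
def FlatRegime (A : (n : ℕ) → Fin n → ℕ) (m k : ℕ → ℕ) (c : ℝ) : Prop :=
  Tendsto (fun n : ℕ => (n : ℝ) ^ ((3 : ℝ)/2) * plantV n (A n) / (k n : ℝ)) atTop (𝓝 0) ∧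
  Tendsto (fun n : ℕ => (m n : ℝ) / ((k n : ℝ) * Real.sqrt n)) atTop (𝓝 c)

/-- The Intermediate regime: `n^{3/2} V(A)/k → λ` and `m/(k n^{1/2}) → c`. -/
def IntermediateRegime (A : (n : ℕ) → Fin n → ℕ) (m k : ℕ → ℕ) (lam c : ℝ) : Prop :=
  Tendsto (fun n : ℕ => (n : ℝ) ^ ((3 : ℝ)/2) * plantV n (A n) / (k n : ℝ)) atTop (𝓝 lam) ∧
  Tendsto (fun n : ℕ => (m n : ℝ) / ((k n : ℝ) * Real.sqrt n)) atTop (𝓝 c)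

/-- The Hilly regime: `n^{3/2} V(A)/k → ∞` and `m/(V(A) n²) → c`. -/
def HillyRegime (A : (n : ℕ) → Fin n → ℕ) (m k : ℕ → ℕ) (c : ℝ) : Prop :=
  Tendsto (fun n : ℕ => (n : ℝ) ^ ((3 : ℝ)/2) * plantV n (A n) / (k n : ℝ)) atTop atTop ∧
  Tendsto (fun n : ℕ => (m n : ℝ) / (plantV n (A n) * (n : ℝ) ^ 2)) atTop (𝓝 c)

/-- One of the three regimes holds (with its positive constants). -/
def SomeRegime (A : (n : ℕ) → Fin n → ℕ) (m k : ℕ → ℕ) : Prop :=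
  (∃ c : ℝ, 0 < c ∧ FlatRegime A m k c) ∨
  (∃ lam c : ℝ, 0 < lam ∧ 0 < c ∧ IntermediateRegime A m k lam c) ∨
  (∃ c : ℝ, 0 < c ∧ HillyRegime A m k c)

/-- Change of variables `z = a + y`: expectations under `PL_A(m,n)` are finite sums against the
standard distribution with `m - k` balls. -/
lemma tsum_plProb (n m : ℕ) (a : Fin n → ℕ) (ham : ∑ i, a i ≤ m) (f : (Fin n → ℕ) → ℝ) :
    ∑' z, plProb n m a z * f z =
      ∑ y ∈ piAntidiag univ (m - ∑ i, a i), stProb n (m - ∑ i, a i) y * f (a + y) := by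
  have hinj : Function.Injective (fun y : Fin n → ℕ => a + y) := add_right_injective a
  rw [← hinj.tsum_eq (f := fun z => plProb n m a z * f z)]
  · rw [tsum_eq_sum (s := piAntidiag univ (m - ∑ i, a i))]
    · refine sum_congr rfl fun y hy => ?_
      have hy' : ∑ i, y i = m - ∑ i, a i := (mem_piAntidiag.1 hy).1
      have h1 : (∑ i, (a + y) i = m) ∧ ∀ i, a i ≤ (a + y) i := by
        refine ⟨?_, fun i => by simp⟩
        simp only [Pi.add_apply, sum_add_distrib]
        omega
      rw [plProb, stProb, if_pos h1, if_pos hy']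
      simp only [Pi.add_apply, Nat.add_sub_cancel_left]
    · intro y hy
      have h1 : ¬ ((∑ i, (a + y) i = m) ∧ ∀ i, a i ≤ (a + y) i) := by
        rintro ⟨h, -⟩
        refine hy (mem_piAntidiag.2 ⟨?_, fun i _ => mem_univ i⟩)
        simp only [Pi.add_apply, sum_add_distrib] at h
        exact Nat.eq_sub_of_add_eq' h
      simp only [plProb, if_neg h1, zero_mul]
  · intro z hz
    have h : (∑ i, z i = m) ∧ ∀ i, a i ≤ z i := by
      by_contra h
      exact hz (by simp only [plProb, if_neg h, zero_mul])
    exact ⟨z - a, by ext i; simp [Nat.add_sub_cancel' (h.2 i)]⟩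

lemma st_mgf (n N : ℕ) (b : Fin n → ℝ) (t : ℝ) :
    ∑ y ∈ piAntidiag univ N, stProb n N y * Real.exp (t * ∑ i, b i * y i) =
      (∑ i, (n : ℝ)⁻¹ * Real.exp (t * b i)) ^ N := by
  rw [sum_pow_eq_sum_piAntidiag]
  refine sum_congr rfl fun y hy => ?_
  have hy' : ∑ i, y i = N := (mem_piAntidiag.1 hy).1
  have hmul : (Nat.factorial N : ℝ) / ∏ i, (Nat.factorial (y i) : ℝ) =
      (Nat.multinomial univ y : ℝ) := by
    have h := Nat.multinomial_spec univ y
    rw [hy'] at h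
    rw [← h, div_eq_iff (prod_ne_zero_iff.2 fun i _ => by positivity)]
    push_cast
    ring
  have hexp : Real.exp (t * ∑ i, b i * y i) = ∏ i, Real.exp (t * b i) ^ y i := by
    rw [mul_sum, Real.exp_sum]
    refine prod_congr rfl fun i _ => ?_
    rw [← Real.exp_nat_mul]
    congr 1
    ring
  simp only [stProb, if_pos hy', hmul, hexp, mul_pow, prod_mul_distrib, prod_pow_eq_pow_sum]
  rw [hy', mul_assoc]

/-- Total mass, first and second moment of a centred linear form of a uniform multinomial vector. -/
lemma st_moments (n N : ℕ) (hn : 1 ≤ n) (b : Fin n → ℝ) (hb : ∑ i, b i = 0) :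
    ∑ y ∈ piAntidiag univ N, stProb n N y = 1 ∧
    ∑ y ∈ piAntidiag univ N, stProb n N y * ∑ i, b i * y i = 0 ∧
    ∑ y ∈ piAntidiag univ N, stProb n N y * (∑ i, b i * y i) ^ 2 =
      N * ((∑ i, b i ^ 2) / n) := by
  have hn0 : (n : ℝ) ≠ 0 := by positivity
  -- termwise derivatives of `∑ c * exp (t * d)` for an arbitrary finite family
  have key : ∀ {ι : Type} (s : Finset ι) (c d : ι → ℝ) (t : ℝ),
      HasDerivAt (fun t => ∑ j ∈ s, c j * Real.exp (t * d j))
        (∑ j ∈ s, c j * d j * Real.exp (t * d j)) t := by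
    intro ι s c d t
    refine HasDerivAt.fun_sum fun j _ => ?_
    have h := (((hasDerivAt_id' t).mul_const (d j)).exp).const_mul (c j)
    exact h.congr_deriv (by ring)
  set M : ℝ → ℝ := fun t => ∑ i, (n : ℝ)⁻¹ * Real.exp (t * b i) with hM
  set M1 : ℝ → ℝ := fun t => ∑ i, (n : ℝ)⁻¹ * b i * Real.exp (t * b i) with hM1
  have hM0 : M 0 = 1 := by simp [hM, hn0]
  have hM10 : M1 0 = 0 := by simp [hM1, ← mul_sum, hb]
  have dM : ∀ t, HasDerivAt M (M1 t) t := fun t => key univ _ b t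
  have dM1 : HasDerivAt M1 (∑ i, (n : ℝ)⁻¹ * b i * b i * Real.exp (0 * b i)) 0 := key univ _ b 0
  have hG : (fun t => ∑ y ∈ piAntidiag univ N, stProb n N y * Real.exp (t * ∑ i, b i * y i)) =
      fun t => M t ^ N := funext fun t => st_mgf n N b t
  have h1 : ∀ t, ∑ y ∈ piAntidiag univ N,
      stProb n N y * (∑ i, b i * y i) * Real.exp (t * ∑ i, b i * y i) =
      N * M t ^ (N - 1) * M1 t := by
    intro t
    have h := key (piAntidiag univ N) (stProb n N) (fun y => ∑ i, b i * y i) t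
    rw [hG] at h
    exact h.unique ((dM t).fun_pow N)
  refine ⟨?_, ?_, ?_⟩
  · simpa [hM0] using congrFun hG 0
  · simpa [hM10] using h1 0
  · have h := key (piAntidiag univ N) (fun y => stProb n N y * ∑ i, b i * y i)
      (fun y => ∑ i, b i * y i) 0
    rw [funext h1] at h
    have h2 := h.unique ((((dM 0).fun_pow (N - 1)).const_mul (N : ℝ)).mul dM1)
    simp only [zero_mul, Real.exp_zero, mul_one, hM0, hM10, one_pow, mul_zero, zero_add] at h2
    simp only [pow_two, ← mul_assoc]
    rw [h2]
    simp only [mul_assoc, ← mul_sum]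
    ring

/-- Decomposition of the statistic at `a + y` into its mean and a centred linear form in `y`. -/
lemma HStat_add (n m : ℕ) (hn : 1 ≤ n) (a y : Fin n → ℕ) (hm : m ≠ 0)
    (hy : ∑ i, a i + ∑ i, y i = m) :
    HStat n m a (a + y) = plantV n a * (n : ℝ) ^ 2 / m +
      (n : ℝ) / m * ∑ i, ((a i : ℝ) - (∑ j, (a j : ℝ)) / n) * y i := by
  have hn0 : (n : ℝ) ≠ 0 := by positivity
  have hm0 : (m : ℝ) ≠ 0 := by positivity
  have hy' : (∑ i, (a i : ℝ)) + ∑ i, (y i : ℝ) = m := by exact_mod_cast hy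
  have e1 : HStat n m a (a + y) = (n : ℝ) / m * (∑ i, (a i : ℝ) ^ 2 + ∑ i, (a i : ℝ) * y i
      - (∑ i, (a i : ℝ)) * (m / n)) := by
    rw [sum_mul, ← sum_add_distrib, ← sum_sub_distrib, mul_sum]
    refine sum_congr rfl fun i _ => ?_
    simp only [qStat, Pi.add_apply, Nat.cast_add]
    ring
  have e2 : ∑ i, ((a i : ℝ) - (∑ j, (a j : ℝ)) / n) * y i =
      ∑ i, (a i : ℝ) * y i - (∑ j, (a j : ℝ)) / n * ∑ i, (y i : ℝ) := by
    simp only [sub_mul, sum_sub_distrib, ← mul_sum]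
  rw [e1, e2, plantV, ← eq_sub_iff_add_eq'.2 hy' |>.symm]
  field_simp
  ring

/-- under PL_A(m,n), `E[H_A] = V(A)n²/m` and
`Var[H_A] = (m−k)V(A)n²/m²` exactly. -/
theorem hstat_pl_moments (n m : ℕ) (hn : 1 ≤ n)
    (a : Fin n → ℕ) (k : ℕ) (hka : ∑ i, a i = k) (hkm : k ≤ m) :
    expec (plProb n m a) (HStat n m a) = plantV n a * (n : ℝ) ^ 2 / m ∧
    varOf (plProb n m a) (HStat n m a) =
      ((m : ℝ) - k) * plantV n a * (n : ℝ) ^ 2 / (m : ℝ) ^ 2 := by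
  subst hka
  rcases Nat.eq_zero_or_pos m with rfl | hm
  · -- no balls: division by `m = 0` makes the statistic and both right-hand sides zero
    simp [expec, varOf, HStat, qStat]
  have hn0 : (n : ℝ) ≠ 0 := by positivity
  set b : Fin n → ℝ := fun i => (a i : ℝ) - (∑ j, (a j : ℝ)) / n with hb
  have hb0 : ∑ i, b i = 0 := by
    simp only [hb, sum_sub_distrib, sum_const, card_univ, Fintype.card_fin, nsmul_eq_mul]
    field_simp
    ring
  have hb2 : (∑ i, b i ^ 2) / n = plantV n a := by
    simp only [hb, sub_sq, sum_sub_distrib, sum_add_distrib, sum_const, card_univ,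
      Fintype.card_fin, nsmul_eq_mul, ← sum_mul, ← mul_sum, plantV]
    field_simp
    ring
  obtain ⟨s0, s1, s2⟩ := st_moments n (m - ∑ i, a i) hn b hb0
  have hH : ∀ y ∈ piAntidiag univ (m - ∑ i, a i), HStat n m a (a + y) =
      plantV n a * (n : ℝ) ^ 2 / m + (n : ℝ) / m * ∑ i, b i * y i := by
    intro y hy
    have hy' : ∑ i, y i = m - ∑ i, a i := (mem_piAntidiag.1 hy).1
    exact HStat_add n m hn a y hm.ne' (by omega)
  have hE : expec (plProb n m a) (HStat n m a) = plantV n a * (n : ℝ) ^ 2 / m := by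
    rw [expec, tsum_plProb n m a hkm, sum_congr rfl fun y hy => by rw [hH y hy]]
    simp only [mul_add, sum_add_distrib, ← sum_mul, s0, one_mul, mul_left_comm _ ((n : ℝ) / m),
      ← mul_sum]
    rw [s1, mul_zero, add_zero]
  refine ⟨hE, ?_⟩
  rw [varOf, hE, tsum_plProb n m a hkm (fun z => (HStat n m a z - _) ^ 2),
    sum_congr rfl fun y hy => by rw [hH y hy]]
  simp only [add_sub_cancel_left, mul_pow, mul_left_comm _ (((n : ℝ) / m) ^ 2), ← mul_sum]
  rw [s2, hb2, Nat.cast_sub hkm]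
  ring
end

section
/- Suppose k(n)/√n → ∞ and one of the three regimes holds: (Flat) n^{3/2}V(A)/k → 0 and m/(k n^{1/2}) → c > 0; (Intermediate) n^{3/2}V(A)/k → λ > 0 and m/(k n^{1/2}) → c > 0; or (Hilly) n^{3/2}V(A)/k → ∞ and m/(V(A)n²) → c > 0. Then under the standard distribution ST(m,n), the variance of the statistic F_A(Z) = Σ_i a_i q_i² satisfies Var_{ST}[F_A] − 2k²n/m² → 0 as n → ∞. -/
/-!
Write `X_i = z_i − m/n`, so that `F_A = (n/m)² Σ_i a_i X_i²`. Throwing one more ball gives the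
recursion `E_{m+1}[T] = (1/n) Σ_l E_m[T(· + e_l)]` (`stExpec_succ`), and under it `X_i` is
incremented by the centred step `ξ^l_i = 1[i = l] − 1/n`. Induction on `m` then yields
`E[X_i] = 0`, `E[X_i X_j] = m c_ij` and
`E[X_i² X_j²] = m d_ij + m(m−1)(c_ii c_jj + 2 c_ij²)`, where `c_ij` and `d_ij` are the moments
of `ξ_i ξ_j` and `ξ_i² ξ_j²` (third moments of `X` drop out because `ξ` is centred).
Hence `Cov(X_i², X_j²)` takes only two values, one on and one off the diagonal, which gives a
closed form for the variance.

With `p = 1/n`, `r = n/m`, `w = k²n/m²` and `u = n³V(A)/m²` this closed form reads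
`Var F_A = (u + w) G(p, r) + w H(p, r)` (`var_eq_scaled`), with polynomials `G`, `H` such that
`G(0,0) = 2` and `H(0,0) = 0`. In each regime `r → 0`, `u → 0` and `w` converges, so
`Var F_A − 2w → 0`.
-/

open Finset Filter Topology

/-! ### Expectation under the standard distribution -/

/-- Expectation under ST(m,n), as a sum over the finitely many configurations of `m` balls. -/
noncomputable def stE (n m : ℕ) (T : (Fin n → ℕ) → ℝ) : ℝ :=
  ∑ z ∈ Finset.piAntidiag (Finset.univ : Finset (Fin n)) m, stProb n m z * T z

theorem stProb_eq_zero {n m : ℕ} {z : Fin n → ℕ}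
    (hz : z ∉ Finset.piAntidiag (Finset.univ : Finset (Fin n)) m) : stProb n m z = 0 := by
  have : ¬ ∑ i, z i = m := by simpa [Finset.mem_piAntidiag] using hz
  simp [stProb, this]

theorem tsum_stProb {n m : ℕ} (T : (Fin n → ℕ) → ℝ) :
    ∑' z : Fin n → ℕ, stProb n m z * T z = stE n m T := by
  apply tsum_eq_sum
  intro z hz
  rw [stProb_eq_zero hz, zero_mul]

theorem stE_add {n m : ℕ} (S T : (Fin n → ℕ) → ℝ) :
    stE n m (fun z => S z + T z) = stE n m S + stE n m T := by
  simp [stE, mul_add, Finset.sum_add_distrib]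

theorem stE_mul {n m : ℕ} (c : ℝ) (T : (Fin n → ℕ) → ℝ) :
    stE n m (fun z => c * T z) = c * stE n m T := by
  simp only [stE, Finset.mul_sum]
  exact Finset.sum_congr rfl fun z _ => by ring

theorem stE_sum {n m : ℕ} {ι : Type} (s : Finset ι) (T : ι → (Fin n → ℕ) → ℝ) :
    stE n m (fun z => ∑ i ∈ s, T i z) = ∑ i ∈ s, stE n m (T i) := by
  simp only [stE, Finset.mul_sum]
  exact Finset.sum_comm

theorem stProb_zero (n : ℕ) : stProb n 0 0 = 1 := by
  simp [stProb]

theorem stE_zero (n : ℕ) (T : (Fin n → ℕ) → ℝ) : stE n 0 T = T 0 := by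
  simp [stE, stProb_zero]

/-- Contribution to `stProb n (m+1) z` of the event that the last ball lands in bin `l`, up to
the factor `1/n`. -/
noncomputable def stPart (n m : ℕ) (l : Fin n) (z : Fin n → ℕ) : ℝ :=
  if ∑ i, z i = m + 1 then
    (z l : ℝ) * ((Nat.factorial m : ℝ) / ∏ i, (Nat.factorial (z i) : ℝ)) * ((n : ℝ))⁻¹ ^ m
  else 0

theorem stProb_succ (n m : ℕ) (z : Fin n → ℕ) :
    stProb n (m + 1) z = ∑ l, (n : ℝ)⁻¹ * stPart n m l z := by
  unfold stProb stPart
  split_ifs with h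
  · have h' : (∑ l, (z l : ℝ)) = m + 1 := by exact_mod_cast h
    rw [Nat.factorial_succ, ← Finset.mul_sum, ← Finset.sum_mul, ← Finset.sum_mul, h']
    push_cast
    ring
  · simp

theorem stPart_add (n m : ℕ) (l : Fin n) (z : Fin n → ℕ) :
    stPart n m l (z + Pi.single l 1) = stProb n m z := by
  have hs : ∑ i, (z + Pi.single l 1 : Fin n → ℕ) i = ∑ i, z i + 1 := by
    simp [Finset.sum_add_distrib]
  have hp : ∏ i, (Nat.factorial ((z + Pi.single l 1 : Fin n → ℕ) i) : ℝ) =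
      (z l + 1) * ∏ i, (Nat.factorial (z i) : ℝ) := by
    rw [← Finset.mul_prod_erase _ _ (Finset.mem_univ l),
      ← Finset.mul_prod_erase Finset.univ (fun i => (Nat.factorial (z i) : ℝ))
        (Finset.mem_univ l), ← mul_assoc]
    congr 1
    · simp [Nat.factorial_succ]
    · refine Finset.prod_congr rfl fun i hi => ?_
      simp [Finset.ne_of_mem_erase hi]
  unfold stPart stProb
  rw [hs, hp]
  have h1 : (z l : ℝ) + 1 ≠ 0 := by positivity
  have h2 : (∏ i, (Nat.factorial (z i) : ℝ)) ≠ 0 :=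
    Finset.prod_ne_zero_iff.2 fun i _ => by positivity
  by_cases h : ∑ i, z i = m
  · simp only [h, if_true, Pi.add_apply, Pi.single_eq_same]
    push_cast
    field_simp
  · simp [h]

theorem stPart_sum (n m : ℕ) (l : Fin n) (T : (Fin n → ℕ) → ℝ) :
    ∑ z ∈ Finset.piAntidiag (Finset.univ : Finset (Fin n)) (m + 1), stPart n m l z * T z =
      stE n m (fun z => T (z + Pi.single l 1)) := by
  rw [← tsum_stProb, ← tsum_eq_sum (L := SummationFilter.unconditional _)]
  · have hinj : Function.Injective (fun z : Fin n → ℕ => z + Pi.single l 1) :=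
      add_left_injective _
    rw [← hinj.tsum_eq]
    · exact tsum_congr fun z => by rw [stPart_add]
    · intro z hz
      -- `stPart n m l z` carries the factor `z l`, so on its support bin `l` is non-empty.
      have hl : z l ≠ 0 := by
        intro h0
        apply hz
        simp [stPart, h0]
      refine ⟨z - Pi.single l 1, ?_⟩
      funext i
      by_cases hi : i = l
      · subst hi
        simp
        omega
      · simp [hi]
  · intro z hz
    have : ¬ ∑ i, z i = m + 1 := by simpa [Finset.mem_piAntidiag] using hz
    simp [stPart, this]

/-- Conditioning on the bin of the last ball. -/
theorem stExpec_succ (n m : ℕ) (T : (Fin n → ℕ) → ℝ) :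
    stE n (m + 1) T = stE n m (fun z => (n : ℝ)⁻¹ * ∑ l, T (z + Pi.single l 1)) := by
  rw [stE_mul, stE_sum]
  simp_rw [← stPart_sum]
  rw [Finset.sum_comm, Finset.mul_sum]
  unfold stE
  refine Finset.sum_congr rfl fun z _ => ?_
  rw [stProb_succ, ← Finset.mul_sum, ← Finset.sum_mul, mul_assoc]

/-! ### Moments of the centred counts -/

/-- Centred count of bin `i`. -/
noncomputable def cX (n m : ℕ) (z : Fin n → ℕ) (i : Fin n) : ℝ := (z i : ℝ) - (m : ℝ) / n

/-- Centred increment of the count of bin `i` caused by a ball landing in bin `l`. -/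
noncomputable def xi (n : ℕ) (l i : Fin n) : ℝ := (if i = l then 1 else 0) - (n : ℝ)⁻¹

/-- Covariance of the increments of bins `i` and `j`. -/
noncomputable def cc (n : ℕ) (i j : Fin n) : ℝ := (n : ℝ)⁻¹ * ∑ l, xi n l i * xi n l j

/-- Expectation of `ξ_i² ξ_j²`. -/
noncomputable def dd (n : ℕ) (i j : Fin n) : ℝ :=
  (n : ℝ)⁻¹ * ∑ l, xi n l i ^ 2 * xi n l j ^ 2

theorem cX_succ (n m : ℕ) (z : Fin n → ℕ) (l i : Fin n) :
    cX n (m + 1) (z + Pi.single l 1) i = cX n m z i + xi n l i := by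
  unfold cX xi
  by_cases h : i = l
  · subst h
    simp
    ring
  · simp [h]
    ring

theorem sum_xi (n : ℕ) (i : Fin n) : ∑ l, xi n l i = 0 := by
  have : (n : ℝ) ≠ 0 := by exact_mod_cast (Fin.pos i).ne'
  simp [xi, Finset.sum_sub_distrib, this]

theorem stE_one {n : ℕ} (hn : 0 < n) (m : ℕ) : stE n m (fun _ => 1) = 1 := by
  have h : (n : ℝ) ≠ 0 := by exact_mod_cast hn.ne'
  induction m with
  | zero => rw [stE_zero]
  | succ m ih =>
    rw [stExpec_succ]
    simpa [h] using ih

theorem stE_const {n : ℕ} (hn : 0 < n) (m : ℕ) (c : ℝ) : stE n m (fun _ => c) = c := by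
  have := stE_mul (n := n) (m := m) c (fun _ => 1)
  rw [stE_one hn] at this
  simpa using this

theorem stE_X {n : ℕ} (m : ℕ) (i : Fin n) : stE n m (fun z => cX n m z i) = 0 := by
  have h : (n : ℝ) ≠ 0 := by exact_mod_cast (Fin.pos i).ne'
  induction m with
  | zero => simp [stE_zero, cX]
  | succ m ih =>
    rw [stExpec_succ]
    simp_rw [cX_succ, Finset.sum_add_distrib, sum_xi]
    simpa [h] using ih

theorem stE_XX {n : ℕ} (m : ℕ) (i j : Fin n) :
    stE n m (fun z => cX n m z i * cX n m z j) = m * cc n i j := by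
  have h : (n : ℝ) ≠ 0 := by exact_mod_cast (Fin.pos i).ne'
  induction m with
  | zero => simp [stE_zero, cX]
  | succ m ih =>
    have key : ∀ x y : ℝ, (n : ℝ)⁻¹ * ∑ l, (x + xi n l i) * (y + xi n l j) =
        x * y + cc n i j := by
      intro x y
      have : ∑ l, (x + xi n l i) * (y + xi n l j) =
          ∑ l : Fin n, x * y + x * ∑ l, xi n l j + y * ∑ l, xi n l i +
            ∑ l, xi n l i * xi n l j := by
        simp only [Finset.mul_sum, ← Finset.sum_add_distrib]
        exact Finset.sum_congr rfl fun l _ => by ring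
      rw [this, sum_xi, sum_xi, cc]
      simp
      field_simp
    rw [stExpec_succ]
    simp_rw [cX_succ, key]
    rw [stE_add, ih, stE_const (Fin.pos i)]
    push_cast
    ring

theorem stE_XXXX {n : ℕ} (m : ℕ) (i j : Fin n) :
    stE n m (fun z => cX n m z i ^ 2 * cX n m z j ^ 2) =
      m * dd n i j + m * (m - 1) * (cc n i i * cc n j j + 2 * cc n i j ^ 2) := by
  have h : (n : ℝ) ≠ 0 := by exact_mod_cast (Fin.pos i).ne'
  induction m with
  | zero => simp [stE_zero, cX]
  | succ m ih =>
    -- The coefficients of `x` and `y` need no closed form, as `E[X_i] = E[X_j] = 0`.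
    have key : ∀ x y : ℝ, (n : ℝ)⁻¹ * ∑ l, (x + xi n l i) ^ 2 * (y + xi n l j) ^ 2 =
        x ^ 2 * y ^ 2 + (cc n j j * (x * x) + (cc n i i * (y * y) + (4 * cc n i j * (x * y) +
          (2 * ((n : ℝ)⁻¹ * ∑ l, xi n l i * xi n l j ^ 2) * x +
          (2 * ((n : ℝ)⁻¹ * ∑ l, xi n l i ^ 2 * xi n l j) * y + dd n i j))))) := by
      intro x y
      have : ∑ l, (x + xi n l i) ^ 2 * (y + xi n l j) ^ 2 =
          ∑ l : Fin n, x ^ 2 * y ^ 2 + 2 * x ^ 2 * y * ∑ l, xi n l j +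
            2 * x * y ^ 2 * ∑ l, xi n l i + x ^ 2 * ∑ l, xi n l j * xi n l j +
            y ^ 2 * ∑ l, xi n l i * xi n l i + 4 * x * y * ∑ l, xi n l i * xi n l j +
            2 * x * ∑ l, xi n l i * xi n l j ^ 2 + 2 * y * ∑ l, xi n l i ^ 2 * xi n l j +
            ∑ l, xi n l i ^ 2 * xi n l j ^ 2 := by
        simp only [Finset.mul_sum, ← Finset.sum_add_distrib]
        exact Finset.sum_congr rfl fun l _ => by ring
      rw [this, sum_xi, sum_xi]
      simp only [cc, dd, Finset.sum_const, Finset.card_univ, Fintype.card_fin, nsmul_eq_mul]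
      field_simp
      ring
    rw [stExpec_succ]
    simp_rw [cX_succ, key]
    rw [stE_add, ih, stE_add, stE_mul, stE_XX, stE_add, stE_mul, stE_XX, stE_add, stE_mul,
      stE_XX, stE_add, stE_mul, stE_X, stE_add, stE_mul, stE_X, stE_const (Fin.pos i)]
    push_cast
    ring

theorem cc_eq (n : ℕ) (i j : Fin n) :
    cc n i j = if i = j then (n : ℝ)⁻¹ - (n : ℝ)⁻¹ ^ 2 else -(n : ℝ)⁻¹ ^ 2 := by
  have h : (n : ℝ) ≠ 0 := by exact_mod_cast (Fin.pos i).ne'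
  have : ∑ l, xi n l i * xi n l j = (if i = j then 1 else 0) - (n : ℝ)⁻¹ := by
    have e : ∀ l, xi n l i * xi n l j =
        (if i = l then xi n l j else 0) - (n : ℝ)⁻¹ * xi n l j := by
      intro l
      unfold xi
      split_ifs <;> ring
    simp_rw [e]
    rw [Finset.sum_sub_distrib, ← Finset.mul_sum, sum_xi]
    simp [xi, eq_comm]
  rw [cc, this]
  split_ifs <;> ring

theorem dd_eq (n : ℕ) (i j : Fin n) :
    dd n i j = if i = j then
      (n : ℝ)⁻¹ - 4 * (n : ℝ)⁻¹ ^ 2 + 6 * (n : ℝ)⁻¹ ^ 3 - 3 * (n : ℝ)⁻¹ ^ 4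
      else 2 * (n : ℝ)⁻¹ ^ 3 - 3 * (n : ℝ)⁻¹ ^ 4 := by
  have h : (n : ℝ) ≠ 0 := by exact_mod_cast (Fin.pos i).ne'
  have hsq : ∀ j : Fin n, ∑ l, xi n l j ^ 2 = 1 - (n : ℝ)⁻¹ := by
    intro j
    have := cc_eq n j j
    simp only [if_true, cc, ← pow_two] at this
    field_simp at this ⊢
    linarith
  have : ∑ l, xi n l i ^ 2 * xi n l j ^ 2 =
      (1 - 2 * (n : ℝ)⁻¹) * ((if i = j then 1 else 0) - (n : ℝ)⁻¹) ^ 2 +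
        (n : ℝ)⁻¹ ^ 2 * (1 - (n : ℝ)⁻¹) := by
    have e : ∀ l, xi n l i ^ 2 * xi n l j ^ 2 =
        (if i = l then (1 - 2 * (n : ℝ)⁻¹) * xi n l j ^ 2 else 0) +
          (n : ℝ)⁻¹ ^ 2 * xi n l j ^ 2 := by
      intro l
      unfold xi
      split_ifs <;> ring
    simp_rw [e]
    rw [Finset.sum_add_distrib, ← Finset.mul_sum, hsq]
    simp [xi, eq_comm]
  rw [dd, this]
  split_ifs <;> field_simp <;> ring

/-! ### The variance of the statistic -/

/-- `Cov(X_i², X_j²)` for distinct bins, in terms of the number `m` of balls and `p = 1/n`. -/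
noncomputable def covOff (m p : ℝ) : ℝ :=
  m * (2 * p ^ 3 - 3 * p ^ 4) - m * (p - p ^ 2) ^ 2 + 2 * m * (m - 1) * p ^ 4

/-- `Var(X_i²)`, in terms of the number `m` of balls and `p = 1/n`. -/
noncomputable def covDiag (m p : ℝ) : ℝ :=
  m * (p - 4 * p ^ 2 + 6 * p ^ 3 - 3 * p ^ 4) - m * (p - p ^ 2) ^ 2 +
    2 * m * (m - 1) * (p - p ^ 2) ^ 2

theorem cov_eq {n : ℕ} (m : ℕ) (i j : Fin n) :
    stE n m (fun z => cX n m z i ^ 2 * cX n m z j ^ 2) -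
      stE n m (fun z => cX n m z i ^ 2) * stE n m (fun z => cX n m z j ^ 2) =
      covOff m (n : ℝ)⁻¹ +
        if i = j then covDiag m (n : ℝ)⁻¹ - covOff m (n : ℝ)⁻¹ else 0 := by
  simp_rw [stE_XXXX, pow_two (cX n m _ _), stE_XX, cc_eq, dd_eq]
  by_cases h : i = j
  · simp only [h, if_true, covDiag, covOff]
    ring
  · simp only [h, if_false, if_true, covOff]
    ring

theorem varOf_eq {n : ℕ} (hn : 0 < n) (m : ℕ) (T : (Fin n → ℕ) → ℝ) :
    varOf (stProb n m) T = stE n m (fun z => T z ^ 2) - stE n m T ^ 2 := by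
  unfold varOf expec
  rw [tsum_stProb, tsum_stProb]
  have : (fun z => (T z - stE n m T) ^ 2) =
      fun z => T z ^ 2 + ((-2 * stE n m T) * T z + stE n m T ^ 2) := by
    funext z
    ring
  rw [this, stE_add, stE_add, stE_mul, stE_const hn]
  ring

theorem var_FStat {n : ℕ} (hn : 0 < n) (m : ℕ) (a : Fin n → ℕ) :
    varOf (stProb n m) (FStat n m a) = ((n : ℝ) / m) ^ 4 *
      ((∑ i, (a i : ℝ)) ^ 2 * covOff m (n : ℝ)⁻¹ +
        (∑ i, (a i : ℝ) ^ 2) * (covDiag m (n : ℝ)⁻¹ - covOff m (n : ℝ)⁻¹)) := by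
  have hF : FStat n m a = fun z => ((n : ℝ) / m) ^ 2 * ∑ i, (a i : ℝ) * cX n m z i ^ 2 := by
    funext z
    unfold FStat qStat
    rw [Finset.mul_sum]
    exact Finset.sum_congr rfl fun i _ => by rw [cX]; ring
  have hF2 : ∀ z, FStat n m a z ^ 2 = ((n : ℝ) / m) ^ 4 *
      ∑ i, ∑ j, (a i * a j : ℝ) * (cX n m z i ^ 2 * cX n m z j ^ 2) := by
    intro z
    rw [hF, mul_pow, ← pow_mul, pow_two (∑ i, _), Finset.sum_mul_sum]
    congr 1
    exact Finset.sum_congr rfl fun i _ => Finset.sum_congr rfl fun j _ => by ring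
  rw [varOf_eq hn]
  simp_rw [hF2]
  rw [hF, stE_mul, stE_mul, stE_sum, stE_sum]
  simp_rw [stE_sum, stE_mul]
  rw [mul_pow, ← pow_mul, pow_two (∑ i, _ * stE _ _ _), Finset.sum_mul_sum, ← mul_sub]
  congr 1
  rw [← Finset.sum_sub_distrib]
  simp_rw [← Finset.sum_sub_distrib]
  have e : ∀ i j : Fin n, (a i * a j : ℝ) * stE n m (fun z => cX n m z i ^ 2 * cX n m z j ^ 2) -
      a i * stE n m (fun z => cX n m z i ^ 2) * (a j * stE n m (fun z => cX n m z j ^ 2)) =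
      (a i * a j : ℝ) * covOff m (n : ℝ)⁻¹ +
        if i = j then (a i * a j : ℝ) * (covDiag m (n : ℝ)⁻¹ - covOff m (n : ℝ)⁻¹) else 0 := by
    intro i j
    rw [← mul_ite_zero, ← mul_add, ← cov_eq]
    ring
  simp_rw [e, Finset.sum_add_distrib]
  congr 1
  · rw [pow_two, Finset.sum_mul_sum]
    simp_rw [Finset.sum_mul]
  · simp [Finset.sum_mul, pow_two]

/-- Coefficient of `n² Σ a_i² / m²` in the variance, with `p = 1/n` and `r = n/m`. -/
noncomputable def GG (p r : ℝ) : ℝ :=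
  r * (1 - 4 * p + 6 * p ^ 2 - 3 * p ^ 3) + 2 * (1 - r * p) * (1 - p) ^ 2 -
    r * (2 * p ^ 2 - 3 * p ^ 3) - 2 * (1 - r * p) * p ^ 2

/-- Coefficient of `k²n/m²` in the variance, with `p = 1/n` and `r = n/m`. -/
noncomputable def HH (p r : ℝ) : ℝ :=
  r * p * (2 - 3 * p) - r * (1 - p) ^ 2 + 2 * (1 - r * p) * p

theorem var_eq_scaled {n m : ℕ} (hn : 0 < n) (hm : 0 < m) (a : Fin n → ℕ) (k : ℕ)
    (hk : ∑ i, a i = k) :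
    varOf (stProb n m) (FStat n m a) =
      ((n : ℝ) ^ 3 * plantV n a / (m : ℝ) ^ 2 + (k : ℝ) ^ 2 * n / (m : ℝ) ^ 2) *
        GG (n : ℝ)⁻¹ ((n : ℝ) / m) +
      (k : ℝ) ^ 2 * n / (m : ℝ) ^ 2 * HH (n : ℝ)⁻¹ ((n : ℝ) / m) := by
  have hk' : ∑ i, (a i : ℝ) = k := by exact_mod_cast hk
  have h1 : (n : ℝ) ≠ 0 := by positivity
  have h2 : (m : ℝ) ≠ 0 := by positivity
  rw [var_FStat hn, hk', plantV, hk']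
  unfold GG HH covDiag covOff
  field_simp
  ring

/-! ### Asymptotics -/

/-- If `r = n/m → 0`, `u = n³V/m² → 0` and `w = k²n/m²` converges, the variance is `2w + o(1)`. -/
theorem var_tendsto (A : (n : ℕ) → Fin n → ℕ) (m k : ℕ → ℕ)
    (hka : ∀ n, ∑ i, A n i = k n) (w0 : ℝ) (hm : ∀ᶠ n in atTop, 0 < m n)
    (hr : Tendsto (fun n : ℕ => (n : ℝ) / m n) atTop (𝓝 0))
    (hu : Tendsto (fun n : ℕ => (n : ℝ) ^ 3 * plantV n (A n) / (m n : ℝ) ^ 2) atTop (𝓝 0))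
    (hw : Tendsto (fun n : ℕ => (k n : ℝ) ^ 2 * n / (m n : ℝ) ^ 2) atTop (𝓝 w0)) :
    Tendsto (fun n : ℕ => varOf (stProb n (m n)) (FStat n (m n) (A n)) -
        2 * (k n : ℝ) ^ 2 * n / (m n : ℝ) ^ 2) atTop (𝓝 0) := by
  have hp : Tendsto (fun n : ℕ => (n : ℝ)⁻¹) atTop (𝓝 0) :=
    tendsto_inv_atTop_zero.comp tendsto_natCast_atTop_atTop
  have hpr := hp.prodMk_nhds hr
  have hG : Tendsto (fun n : ℕ => GG (n : ℝ)⁻¹ ((n : ℝ) / m n)) atTop (𝓝 2) := by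
    have hc : Continuous (fun x : ℝ × ℝ => GG x.1 x.2) := by unfold GG; fun_prop
    have := (hc.tendsto (0, 0)).comp hpr
    simpa [GG, Function.comp_def] using this
  have hH : Tendsto (fun n : ℕ => HH (n : ℝ)⁻¹ ((n : ℝ) / m n)) atTop (𝓝 0) := by
    have hc : Continuous (fun x : ℝ × ℝ => HH x.1 x.2) := by unfold HH; fun_prop
    have := (hc.tendsto (0, 0)).comp hpr
    simpa [HH, Function.comp_def] using this
  have main := (((hu.add hw).mul hG).add (hw.mul hH)).sub (hw.const_mul 2)
  have e0 : (0 + w0) * 2 + w0 * 0 - 2 * w0 = 0 := by ring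
  rw [e0] at main
  refine main.congr' ?_
  filter_upwards [hm, eventually_gt_atTop 0] with n hmn hn
  rw [var_eq_scaled hn hmn (A n) (k n) (hka n)]
  ring

theorem rpow_three_halves (n : ℕ) : (n : ℝ) ^ ((3 : ℝ) / 2) = n * Real.sqrt n := by
  rcases Nat.eq_zero_or_pos n with rfl | hn
  · norm_num
  · have : (0 : ℝ) < n := by exact_mod_cast hn
    rw [Real.sqrt_eq_rpow, show (3 : ℝ) / 2 = 1 + 1 / 2 by norm_num, Real.rpow_add this,
      Real.rpow_one]

/-- The value of the limit `lam` of `n^{3/2}V/k` plays no role here, so this covers both the Flat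
regime (`lam = 0`) and the Intermediate one. -/
theorem var_flat (A : (n : ℕ) → Fin n → ℕ) (m k : ℕ → ℕ) (lam c : ℝ) (hc : 0 < c)
    (hka : ∀ n, ∑ i, A n i = k n)
    (hk : Tendsto (fun n : ℕ => (k n : ℝ) / Real.sqrt n) atTop atTop)
    (hreg : IntermediateRegime A m k lam c) :
    Tendsto (fun n : ℕ => varOf (stProb n (m n)) (FStat n (m n) (A n)) -
        2 * (k n : ℝ) ^ 2 * n / (m n : ℝ) ^ 2) atTop (𝓝 0) := by
  obtain ⟨hs, ht⟩ := hreg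
  have hkinv := tendsto_inv_atTop_zero.comp hk
  have htinv := ht.inv₀ hc.ne'
  have htpos := ht.eventually (eventually_gt_nhds hc)
  have hkpos := hk.eventually_gt_atTop 0
  have hm : ∀ᶠ n in atTop, 0 < m n := by
    filter_upwards [htpos] with n h
    rcases Nat.eq_zero_or_pos (m n) with h0 | h0
    · simp [h0] at h
    · exact h0
  have hk0 : ∀ᶠ n in atTop, (k n : ℝ) ≠ 0 := by
    filter_upwards [hkpos] with n h h0
    simp [h0] at h
  refine var_tendsto A m k hka (c⁻¹ ^ 2) hm ?_ ?_ ?_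
  · have := htinv.mul hkinv
    rw [mul_zero] at this
    refine this.congr' ?_
    filter_upwards [hk0, hm, eventually_gt_atTop 0] with n h1 h2 h3
    have h4 : (0 : ℝ) < n := by exact_mod_cast h3
    have h5 : (0 : ℝ) < m n := by exact_mod_cast h2
    have h6 := Real.sqrt_pos.2 h4
    have h7 := Real.sq_sqrt h4.le
    simp only [Function.comp_def]
    field_simp
    rw [h7]
  · have := (hs.mul (htinv.pow 2)).mul hkinv
    rw [mul_zero] at this
    refine this.congr' ?_
    filter_upwards [hk0, hm, eventually_gt_atTop 0] with n h1 h2 h3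
    have h4 : (0 : ℝ) < n := by exact_mod_cast h3
    have h5 : (0 : ℝ) < m n := by exact_mod_cast h2
    have h6 := Real.sqrt_pos.2 h4
    have h7 := Real.sq_sqrt h4.le
    simp only [Function.comp_def, rpow_three_halves]
    field_simp
    rw [show Real.sqrt n ^ 4 = (Real.sqrt n ^ 2) ^ 2 by ring, h7]
  · refine (htinv.pow 2).congr fun n => ?_
    rw [inv_div, div_pow, mul_pow, Real.sq_sqrt (Nat.cast_nonneg n)]

theorem var_hilly (A : (n : ℕ) → Fin n → ℕ) (m k : ℕ → ℕ) (c : ℝ) (hc : 0 < c)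
    (hka : ∀ n, ∑ i, A n i = k n)
    (hk : Tendsto (fun n : ℕ => (k n : ℝ) / Real.sqrt n) atTop atTop)
    (hreg : HillyRegime A m k c) :
    Tendsto (fun n : ℕ => varOf (stProb n (m n)) (FStat n (m n) (A n)) -
        2 * (k n : ℝ) ^ 2 * n / (m n : ℝ) ^ 2) atTop (𝓝 0) := by
  obtain ⟨hs, hy⟩ := hreg
  have hkinv := tendsto_inv_atTop_zero.comp hk
  have hyinv := hy.inv₀ hc.ne'
  have hypos := hy.eventually (eventually_gt_nhds hc)
  have hkpos := hk.eventually_gt_atTop 0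
  have hspos := hs.eventually_gt_atTop 0
  have hm : ∀ᶠ n in atTop, 0 < m n := by
    filter_upwards [hypos] with n h
    rcases Nat.eq_zero_or_pos (m n) with h0 | h0
    · simp [h0] at h
    · exact h0
  have hk0 : ∀ᶠ n in atTop, (k n : ℝ) ≠ 0 := by
    filter_upwards [hkpos] with n h h0
    simp [h0] at h
  have hV0 : ∀ᶠ n in atTop, plantV n (A n) ≠ 0 := by
    filter_upwards [hspos] with n h h0
    simp [h0] at h
  -- Here `k√n/m → 0`, because `m/(k√n)` is the product of the two quantities of the regime.
  have htinv : Tendsto (fun n : ℕ => ((m n : ℝ) / ((k n : ℝ) * Real.sqrt n))⁻¹) atTop (𝓝 0) := by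
    have := tendsto_inv_atTop_zero.comp (hy.pos_mul_atTop hc hs)
    refine this.congr' ?_
    filter_upwards [hk0, hm, hV0, eventually_gt_atTop 0] with n h1 h2 h8 h3
    have h4 : (0 : ℝ) < n := by exact_mod_cast h3
    have h5 : (0 : ℝ) < m n := by exact_mod_cast h2
    have h6 := Real.sqrt_pos.2 h4
    have h7 := Real.sq_sqrt h4.le
    simp only [Function.comp_def, rpow_three_halves]
    field_simp
    rw [h7]
  have hr : Tendsto (fun n : ℕ => (n : ℝ) / m n) atTop (𝓝 0) := by
    have := htinv.mul hkinv
    rw [mul_zero] at this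
    refine this.congr' ?_
    filter_upwards [hk0, hm, eventually_gt_atTop 0] with n h1 h2 h3
    have h4 : (0 : ℝ) < n := by exact_mod_cast h3
    have h5 : (0 : ℝ) < m n := by exact_mod_cast h2
    have h6 := Real.sqrt_pos.2 h4
    have h7 := Real.sq_sqrt h4.le
    simp only [Function.comp_def]
    field_simp
    rw [h7]
  refine var_tendsto A m k hka 0 hm hr ?_ ?_
  · have := hyinv.mul hr
    rw [mul_zero] at this
    refine this.congr fun n => ?_
    rw [inv_div, div_mul_div_comm]
    ring
  · have := htinv.pow 2
    rw [zero_pow two_ne_zero] at this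
    refine this.congr fun n => ?_
    rw [inv_div, div_pow, mul_pow, Real.sq_sqrt (Nat.cast_nonneg n)]

/-- in all three regimes, `Var_ST[F_A] = 2k²n/m² + o(1)`. -/
theorem fstat_st_variance (A : (n : ℕ) → Fin n → ℕ) (m k : ℕ → ℕ)
    (hka : ∀ n, ∑ i, A n i = k n)
    (hk : Tendsto (fun n : ℕ => (k n : ℝ) / Real.sqrt n) atTop atTop)
    (hreg : SomeRegime A m k) :
    Tendsto (fun n : ℕ => varOf (stProb n (m n)) (FStat n (m n) (A n)) -
        2 * (k n : ℝ) ^ 2 * n / (m n : ℝ) ^ 2) atTop (𝓝 0) := by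
  rcases hreg with ⟨c, hc, h⟩ | ⟨lam, c, _, hc, h⟩ | ⟨c, hc, h⟩
  · exact var_flat A m k 0 c hc hka hk h
  · exact var_flat A m k lam c hc hka hk h
  · exact var_hilly A m k c hc hka hk h
end

section
/- Suppose k(n)/√n → ∞ and one of the three regimes holds: (Flat) n^{3/2}V(A)/k → 0 and m/(k n^{1/2}) → c > 0; (Intermediate) n^{3/2}V(A)/k → λ > 0 and m/(k n^{1/2}) → c > 0; or (Hilly) n^{3/2}V(A)/k → ∞ and m/(V(A)n²) → c > 0. Then under the planted distribution PL_A(m,n), the statistic F_A(Z) = Σ_i a_i q_i² satisfies E_{PL}[F_A] − (kn/m − k²n/m²) → 0 and Var_{PL}[F_A] − 2k²n/m² → 0 as n → ∞. -/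
/-!
Write `z_i = a_i + y_i` with `y` multinomial with `M = m - k` trials, `w_i = y_i - M/n` and
`b_i = a_i - k/n`. Then `q_i = (n/m)(w_i + b_i)`, and since `a_i = k/n + b_i`,

  `F_A - E F_A = (n/m)² ((k/n)(∑ w_i² - M(1 - 1/n)) + ∑ b_i w_i² + 2 ∑ a_i b_i w_i)`.

The vector `w` is a random walk with steps `e_j - (1/n)(1,…,1)`, `j` uniform; expectations along
it are computed one step at a time (`walkE`, linked to `plProb` by `hasSum_plProb`). Each of the
three sums above is a martingale, the middle one because `∑ b_i = 0`, so its second moment is the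
sum of its mean squared increments. The first has variance `2M(M-1)(1/n)(1 - 1/n)`
(`walkE_normSq_var`), which gives the main term `2k²n/m²`; the other two are bounded in
`walkE_quad_sq_le` and `walkE_linear_sq`, and the cross terms are absorbed by Young's inequality
(`walkE_add_sq_le`).

All three regimes enter only through `regime_scales`: the quantities `r = k√n/m` and
`σ = n² V(A)/m` converge. Together with `k/√n → ∞` this forces `n/m → 0` and `k/m → 0`, and
the error bounds `expec_FStat_bound` and `varOf_FStat_bound`, phrased in `n/m`, `k/m`, `r` and
`σ`, tend to zero.
-/

open Finset Filter Topology

/-! ### The planted distribution as a random walk -/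

/-- The centred increment of one ball thrown into bin `j`: `e_j - (1/n)(1,…,1)`. -/
noncomputable def ballStep (n : ℕ) (j : Fin n) : Fin n → ℝ :=
  fun i => (if i = j then 1 else 0) - (n : ℝ)⁻¹

/-- Expectation of `T(w)`, where `w` is the centred occupancy vector
`w_i = y_i - M/n` after `M` uniform throws into `n` bins, defined by
conditioning on the throws one at a time. -/
noncomputable def walkE (n : ℕ) : ℕ → ((Fin n → ℝ) → ℝ) → ℝ
  | 0, T => T 0
  | M + 1, T => walkE n M (fun w => (n : ℝ)⁻¹ * ∑ j, T (w + ballStep n j))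

theorem walkE_mul_sum (n M : ℕ) {ι : Type*} (s : Finset ι) (c : ℝ)
    (f : ι → (Fin n → ℝ) → ℝ) :
    walkE n M (fun w => c * ∑ j ∈ s, f j w) = c * ∑ j ∈ s, walkE n M (f j) := by
  induction M generalizing f with
  | zero => rfl
  | succ M ihM =>
    have : (fun w : Fin n → ℝ => (n : ℝ)⁻¹ * ∑ i, c * ∑ j ∈ s, f j (w + ballStep n i)) =
        fun w => c * ∑ j ∈ s, (n : ℝ)⁻¹ * ∑ i, f j (w + ballStep n i) := by
      funext w
      rw [← Finset.mul_sum, Finset.sum_comm, ← Finset.mul_sum]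
      ring
    simp only [walkE, this]
    exact ihM _

/-- One-step recursion for the planted distribution: condition on the bin of the last ball. If
`z j = a j` the summand vanishes, since removing a ball from bin `j` uncovers the planting. -/
theorem plProb_succ (n M : ℕ) (a z : Fin n → ℕ) :
    plProb n ((∑ i, a i) + (M + 1)) a z = (n : ℝ)⁻¹ * ∑ j,
      if 0 < z j then plProb n ((∑ i, a i) + M) a (z - Pi.single j 1) else 0 := by
  have key : ∀ j, 0 < z j → z - Pi.single j 1 + Pi.single j 1 = z := by
    intro j hj
    funext i
    by_cases h : i = j
    · subst h; simp; omega
    · simp [h]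
  have hsum : ∀ j, 0 < z j → ∑ i, (z - Pi.single j 1 : Fin n → ℕ) i + 1 = ∑ i, z i := by
    intro j hj
    conv_rhs => rw [← key j hj]
    simp [Finset.sum_add_distrib]
  by_cases hz : (∑ i, z i = (∑ i, a i) + (M + 1)) ∧ (∀ i, a i ≤ z i)
  · obtain ⟨hz1, hz2⟩ := hz
    have hterm : ∀ j, (if 0 < z j then plProb n ((∑ i, a i) + M) a (z - Pi.single j 1) else 0)
        = ((z j : ℝ) - a j) * (((Nat.factorial M : ℝ) / ∏ i, (Nat.factorial (z i - a i) : ℝ)) *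
          (n : ℝ)⁻¹ ^ M) := by
      intro j
      by_cases hj : a j < z j
      · have hpos : 0 < z j := by omega
        have hs := hsum j hpos
        have hc : (∑ i, (z - Pi.single j 1 : Fin n → ℕ) i = (∑ i, a i) + M) ∧
            (∀ i, a i ≤ (z - Pi.single j 1 : Fin n → ℕ) i) := by
          refine ⟨by omega, fun i => ?_⟩
          by_cases h : i = j
          · subst h; simp; omega
          · simpa [h] using hz2 i
        have hprod : ∏ i, (Nat.factorial (z i - a i) : ℝ) =
            ((z j : ℝ) - a j) * ∏ i, (Nat.factorial ((z - Pi.single j 1 : Fin n → ℕ) i - a i) : ℝ) := by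
          rw [← Finset.mul_prod_erase _ _ (Finset.mem_univ j)]
          conv_rhs => rw [← Finset.mul_prod_erase _ _ (Finset.mem_univ j), ← mul_assoc]
          congr 1
          · obtain ⟨d, hd⟩ : ∃ d, z j = a j + d + 1 := ⟨z j - a j - 1, by omega⟩
            have e1 : z j - a j = d + 1 := by omega
            have e2 : (z - Pi.single j 1 : Fin n → ℕ) j - a j = d := by simp; omega
            rw [e1, e2, Nat.factorial_succ, hd]
            push_cast
            ring
          · refine Finset.prod_congr rfl fun i hi => ?_
            have : i ≠ j := Finset.ne_of_mem_erase hi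
            simp [this]
        have hne : ((z j : ℝ) - a j) ≠ 0 := by
          have : (a j : ℝ) < z j := by exact_mod_cast hj
          linarith
        have hne2 : ∏ i, (Nat.factorial ((z - Pi.single j 1 : Fin n → ℕ) i - a i) : ℝ) ≠ 0 :=
          Finset.prod_ne_zero_iff.2 fun i _ => by exact_mod_cast Nat.factorial_ne_zero _
        rw [if_pos hpos, plProb, if_pos hc, hprod, Nat.add_sub_cancel_left]
        field_simp
      · have hj' : z j = a j := le_antisymm (not_lt.1 hj) (hz2 j)
        rw [hj', sub_self, zero_mul]
        split_ifs with h
        · rw [plProb, if_neg]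
          rintro ⟨-, h2⟩
          have := h2 j
          simp at this
          omega
        · rfl
    rw [Finset.sum_congr rfl fun j _ => hterm j, ← Finset.sum_mul, plProb, if_pos ⟨hz1, hz2⟩,
      Nat.add_sub_cancel_left]
    have : ∑ j, ((z j : ℝ) - a j) = M + 1 := by
      rw [Finset.sum_sub_distrib]
      have : (∑ i, (z i : ℝ)) = (∑ i, (a i : ℝ)) + (M + 1) := by exact_mod_cast hz1
      linarith
    rw [this, Nat.factorial_succ, pow_succ]
    push_cast
    ring
  · rw [plProb, if_neg hz]
    have : ∀ j, (if 0 < z j then plProb n ((∑ i, a i) + M) a (z - Pi.single j 1) else 0) = 0 := by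
      intro j
      split_ifs with h
      · rw [plProb, if_neg]
        rintro ⟨h1, h2⟩
        apply hz
        have := hsum j h
        refine ⟨by omega, fun i => (h2 i).trans ?_⟩
        simp
      · rfl
    simp [this]

/-- Expectations under `PL_A(k + M, n)` are walk expectations of the centred counts of the `M`
unplanted balls; `HasSum` also supplies the summability behind `expec` and `varOf`. -/
theorem hasSum_plProb (n : ℕ) (a : Fin n → ℕ) (M : ℕ) (T : (Fin n → ℝ) → ℝ) :
    HasSum (fun z => plProb n ((∑ i, a i) + M) a z *
      T (fun i => (z i : ℝ) - a i - M * (n : ℝ)⁻¹)) (walkE n M T) := by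
  induction M generalizing T with
  | zero =>
    have h0 : ∀ z, z ≠ a → plProb n ((∑ i, a i) + 0) a z = 0 := by
      intro z hz
      rw [plProb, if_neg]
      rintro ⟨h1, h2⟩
      apply hz
      have := (Finset.sum_eq_sum_iff_of_le (s := Finset.univ) (f := a) (g := z)
        fun i _ => h2 i).1 (by simpa using h1.symm)
      funext i
      exact (this i (Finset.mem_univ i)).symm
    have h1 : walkE n 0 T = plProb n ((∑ i, a i) + 0) a a *
      T (fun i => (a i : ℝ) - a i - (0 : ℕ) * (n : ℝ)⁻¹) := by
      simp [walkE, plProb]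
      rfl
    rw [h1]
    exact hasSum_single a fun z hz => by rw [h0 z hz, zero_mul]
  | succ M ih =>
    have hj : ∀ j : Fin n, HasSum (fun z : Fin n → ℕ =>
        (if 0 < z j then plProb n ((∑ i, a i) + M) a (z - Pi.single j 1) else 0) *
        T (fun i => (z i : ℝ) - a i - (M + 1 : ℕ) * (n : ℝ)⁻¹))
        (walkE n M fun w => T (w + ballStep n j)) := by
      intro j
      have hinj : Function.Injective (fun z : Fin n → ℕ => z + Pi.single j 1) :=
        add_left_injective _
      refine (hinj.hasSum_iff ?_).1 ?_
      · intro z hz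
        have : ¬ 0 < z j := by
          intro hp
          apply hz
          refine ⟨z - Pi.single j 1, ?_⟩
          funext i
          by_cases h : i = j
          · subst h; simp; omega
          · simp [h]
        simp [this]
      · convert ih (fun w => T (w + ballStep n j)) using 1
        funext z
        simp only [Function.comp]
        rw [if_pos (by simp), add_tsub_cancel_right]
        congr 2
        funext i
        by_cases h : i = j
        · subst h; simp [ballStep]; ring
        · simp [ballStep, h]; ring
    have := (hasSum_sum fun j (_ : j ∈ Finset.univ) => hj j).mul_left (n : ℝ)⁻¹
    rw [walkE, walkE_mul_sum]
    have hfun : (fun z => plProb n ((∑ i, a i) + (M + 1)) a z *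
        T (fun i => (z i : ℝ) - a i - (M + 1 : ℕ) * (n : ℝ)⁻¹)) = fun z : Fin n → ℕ =>
        (n : ℝ)⁻¹ * ∑ j, (if 0 < z j then plProb n ((∑ i, a i) + M) a (z - Pi.single j 1) else 0) *
          T (fun i => (z i : ℝ) - a i - (M + 1 : ℕ) * (n : ℝ)⁻¹) := by
      funext z
      rw [plProb_succ, Finset.mul_sum, Finset.mul_sum, Finset.sum_mul]
      exact Finset.sum_congr rfl fun j _ => by ring
    rw [hfun]
    exact this

/-! ### Moments of the walk -/

theorem walkE_mul (n M : ℕ) (c : ℝ) (f : (Fin n → ℝ) → ℝ) :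
    walkE n M (fun w => c * f w) = c * walkE n M f := by
  simpa using walkE_mul_sum n M (Finset.univ : Finset Unit) c (fun _ => f)

theorem walkE_sum (n M : ℕ) {ι : Type*} (s : Finset ι) (f : ι → (Fin n → ℝ) → ℝ) :
    walkE n M (fun w => ∑ j ∈ s, f j w) = ∑ j ∈ s, walkE n M (f j) := by
  simpa using walkE_mul_sum n M s 1 f

theorem walkE_add (n M : ℕ) (f g : (Fin n → ℝ) → ℝ) :
    walkE n M (fun w => f w + g w) = walkE n M f + walkE n M g := by
  have := walkE_sum n M (Finset.univ : Finset Bool) (fun b => if b then f else g)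
  simpa using this

theorem sum_ballStep (n : ℕ) (j : Fin n) : ∑ i, ballStep n j i = 0 := by
  have hn : (n : ℝ) ≠ 0 := by exact_mod_cast (Fin.pos j).ne'
  simp [ballStep, hn]

/-- Only vectors with coordinate sum zero are reached, so inequalities are needed only there. -/
theorem walkE_mono (n M : ℕ) (f g : (Fin n → ℝ) → ℝ)
    (h : ∀ w, ∑ i, w i = 0 → f w ≤ g w) : walkE n M f ≤ walkE n M g := by
  induction M generalizing f g with
  | zero => exact h 0 (by simp)
  | succ M ih =>
    refine ih _ _ fun w hw => ?_
    refine mul_le_mul_of_nonneg_left (Finset.sum_le_sum fun j _ => h _ ?_) (by positivity)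
    simp [Finset.sum_add_distrib, hw, sum_ballStep]

theorem walkE_congr (n M : ℕ) (f g : (Fin n → ℝ) → ℝ)
    (h : ∀ w, ∑ i, w i = 0 → f w = g w) : walkE n M f = walkE n M g :=
  le_antisymm (walkE_mono n M f g fun w hw => (h w hw).le)
    (walkE_mono n M g f fun w hw => (h w hw).ge)

theorem walkE_const {n : ℕ} (hn : 0 < n) (M : ℕ) (c : ℝ) : walkE n M (fun _ => c) = c := by
  have hn' : (n : ℝ) ≠ 0 := by exact_mod_cast hn.ne'
  induction M with
  | zero => rfl
  | succ M ih => simpa [walkE, hn'] using ih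

theorem sum_mul_ballStep {n : ℕ} (c : Fin n → ℝ) (j : Fin n) :
    ∑ i, c i * ballStep n j i = c j - (n : ℝ)⁻¹ * ∑ i, c i := by
  simp [ballStep, mul_sub, Finset.sum_sub_distrib, ← Finset.sum_mul, mul_comm]

theorem sum_mul_ballStep_sq {n : ℕ} (c : Fin n → ℝ) (j : Fin n) :
    ∑ i, c i * ballStep n j i ^ 2 =
      c j * (1 - 2 * (n : ℝ)⁻¹) + (n : ℝ)⁻¹ ^ 2 * ∑ i, c i := by
  have : ∀ i, c i * ballStep n j i ^ 2 =
      (if i = j then c i * (1 - 2 * (n : ℝ)⁻¹) else 0) + (n : ℝ)⁻¹ ^ 2 * c i := by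
    intro i
    unfold ballStep
    split_ifs <;> ring
  simp [this, Finset.sum_add_distrib, ← Finset.mul_sum]

/-- One step of a martingale: if throwing a ball into bin `j` changes the value `x` by `I j` and
these increments sum to zero, the mean square grows by the mean squared increment. -/
theorem step_sq {n : ℕ} (hn : 0 < n) (x : ℝ) (I : Fin n → ℝ) (hI : ∑ j, I j = 0) :
    (n : ℝ)⁻¹ * ∑ j, (x + I j) ^ 2 = x ^ 2 + (n : ℝ)⁻¹ * ∑ j, I j ^ 2 := by
  have hn' : (n : ℝ) ≠ 0 := by exact_mod_cast hn.ne'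
  have : ∀ j, (x + I j) ^ 2 = x ^ 2 + 2 * x * I j + I j ^ 2 := fun j => by ring
  simp only [this, Finset.sum_add_distrib, ← Finset.mul_sum, hI]
  simp
  field_simp

theorem sum_sub_mean_sq {n : ℕ} (hn : 0 < n) (c : Fin n → ℝ) :
    ∑ j, (c j - (n : ℝ)⁻¹ * ∑ i, c i) ^ 2 = ∑ j, c j ^ 2 - (n : ℝ)⁻¹ * (∑ i, c i) ^ 2 := by
  have hn' : (n : ℝ) ≠ 0 := by exact_mod_cast hn.ne'
  generalize hs : ∑ i, c i = s
  have : ∀ j, (c j - (n : ℝ)⁻¹ * s) ^ 2 =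
    c j ^ 2 - 2 * ((n : ℝ)⁻¹ * s) * c j + ((n : ℝ)⁻¹ * s) ^ 2 := fun j => by ring
  simp only [this, Finset.sum_add_distrib, Finset.sum_sub_distrib, ← Finset.mul_sum, hs]
  simp
  field_simp
  ring

theorem sum_sub_mean {n : ℕ} (hn : 0 < n) (c : Fin n → ℝ) :
    ∑ j, (c j - (n : ℝ)⁻¹ * ∑ i, c i) = 0 := by
  have hn' : (n : ℝ) ≠ 0 := by exact_mod_cast hn.ne'
  simp [Finset.sum_sub_distrib, hn']

theorem walkE_linear {n : ℕ} (hn : 0 < n) (M : ℕ) (c : Fin n → ℝ) :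
    walkE n M (fun w => ∑ i, c i * w i) = 0 := by
  have hn' : (n : ℝ) ≠ 0 := by exact_mod_cast hn.ne'
  induction M with
  | zero => simp [walkE]
  | succ M ih =>
    rw [walkE, ← ih]
    congr 1
    funext w
    simp only [Pi.add_apply, mul_add, Finset.sum_add_distrib, sum_mul_ballStep, sum_sub_mean hn]
    simp [hn']

theorem walkE_linear_sq {n : ℕ} (hn : 0 < n) (M : ℕ) (c : Fin n → ℝ) :
    walkE n M (fun w => (∑ i, c i * w i) ^ 2) =
      M * ((n : ℝ)⁻¹ * (∑ i, c i ^ 2 - (n : ℝ)⁻¹ * (∑ i, c i) ^ 2)) := by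
  induction M with
  | zero => simp [walkE]
  | succ M ih =>
    rw [walkE]
    simp only [Pi.add_apply, mul_add, Finset.sum_add_distrib, sum_mul_ballStep]
    have : ∀ w : Fin n → ℝ, (n : ℝ)⁻¹ * ∑ j, (∑ i, c i * w i + (c j - (n : ℝ)⁻¹ * ∑ i, c i)) ^ 2
      = (∑ i, c i * w i) ^ 2 + (n : ℝ)⁻¹ * (∑ i, c i ^ 2 - (n : ℝ)⁻¹ * (∑ i, c i) ^ 2) := by
      intro w
      rw [step_sq hn _ _ (sum_sub_mean hn c), sum_sub_mean_sq hn]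
    simp only [this]
    rw [walkE_add, ih, walkE_const hn]
    push_cast
    ring

theorem walkE_coord_sq {n : ℕ} (hn : 0 < n) (M : ℕ) (j : Fin n) :
    walkE n M (fun w => w j ^ 2) = M * ((n : ℝ)⁻¹ * (1 - (n : ℝ)⁻¹)) := by
  have := walkE_linear_sq hn M (fun i => if i = j then 1 else 0)
  simpa using this

theorem walkE_quad {n : ℕ} (hn : 0 < n) (M : ℕ) (c : Fin n → ℝ) :
    walkE n M (fun w => ∑ i, c i * w i ^ 2) =
      M * ((n : ℝ)⁻¹ * (1 - (n : ℝ)⁻¹)) * ∑ i, c i := by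
  rw [walkE_sum, Finset.mul_sum]
  refine Finset.sum_congr rfl fun i _ => ?_
  rw [walkE_mul, walkE_coord_sq hn]
  ring

theorem quad_step {n : ℕ} (c w : Fin n → ℝ) (j : Fin n) :
    ∑ i, c i * (w + ballStep n j) i ^ 2 = ∑ i, c i * w i ^ 2 +
      (2 * (c j * w j - (n : ℝ)⁻¹ * ∑ i, c i * w i) +
        (c j * (1 - 2 * (n : ℝ)⁻¹) + (n : ℝ)⁻¹ ^ 2 * ∑ i, c i)) := by
  rw [← sum_mul_ballStep_sq, ← sum_mul_ballStep (fun i => c i * w i), Finset.mul_sum,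
    ← Finset.sum_add_distrib, ← Finset.sum_add_distrib]
  exact Finset.sum_congr rfl fun i _ => by simp only [Pi.add_apply]; ring

/-- Variance of the collision statistic `∑ w_i²`, whose mean is `M (1 - 1/n)`. -/
theorem walkE_normSq_var {n : ℕ} (hn : 0 < n) (M : ℕ) :
    walkE n M (fun w => (∑ i, w i ^ 2 - M * (1 - (n : ℝ)⁻¹)) ^ 2) =
      2 * M * (M - 1) * (n : ℝ)⁻¹ * (1 - (n : ℝ)⁻¹) := by
  have hn' : (n : ℝ) ≠ 0 := by exact_mod_cast hn.ne'
  induction M with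
  | zero => simp [walkE]
  | succ M ih =>
    rw [walkE]
    have : ∀ w : Fin n → ℝ, ∑ i, w i = 0 →
        (n : ℝ)⁻¹ * ∑ j, (∑ i, (w + ballStep n j) i ^ 2 -
          (M + 1 : ℕ) * (1 - (n : ℝ)⁻¹)) ^ 2 =
        (∑ i, w i ^ 2 - M * (1 - (n : ℝ)⁻¹)) ^ 2 + 4 * (n : ℝ)⁻¹ * ∑ i, 1 * w i ^ 2 := by
      intro w hw
      have h1 : ∀ j, (∑ i, (w + ballStep n j) i ^ 2 - (M + 1 : ℕ) * (1 - (n : ℝ)⁻¹)) =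
          (∑ i, w i ^ 2 - M * (1 - (n : ℝ)⁻¹)) + 2 * w j := by
        intro j
        have := quad_step (fun _ => 1) w j
        simp only [one_mul, hw] at this
        rw [this]
        simp
        field_simp
        ring
      simp only [h1]
      rw [step_sq hn _ _ (by rw [← Finset.mul_sum, hw, mul_zero])]
      simp only [mul_pow, ← Finset.mul_sum]
      ring
    rw [walkE_congr n M _ _ this, walkE_add, ih, walkE_mul, walkE_quad hn]
    simp
    field_simp
    ring

/-- For `∑ c_i = 0` the quadratic form `∑ c_i w_i²` is a martingale, which bounds its
second moment. -/
theorem walkE_quad_sq_le {n : ℕ} (hn : 0 < n) (M : ℕ) (c : Fin n → ℝ) (hc : ∑ i, c i = 0) :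
    walkE n M (fun w => (∑ i, c i * w i ^ 2) ^ 2) ≤
      (4 * (M * (n : ℝ)⁻¹) ^ 2 + 2 * (M * (n : ℝ)⁻¹)) * ∑ i, c i ^ 2 := by
  have hn' : (n : ℝ) ≠ 0 := by exact_mod_cast hn.ne'
  have hn1 : (n : ℝ)⁻¹ ≤ 1 := inv_le_one_of_one_le₀ (by exact_mod_cast hn)
  have hn0 : 0 ≤ (n : ℝ)⁻¹ := by positivity
  have hS : 0 ≤ ∑ i, c i ^ 2 := Finset.sum_nonneg fun i _ => sq_nonneg _
  induction M with
  | zero => simp [walkE]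
  | succ M ih =>
    rw [walkE]
    have : ∀ w : Fin n → ℝ, ∑ i, w i = 0 →
        (n : ℝ)⁻¹ * ∑ j, (∑ i, c i * (w + ballStep n j) i ^ 2) ^ 2 ≤
        (∑ i, c i * w i ^ 2) ^ 2 + (8 * (n : ℝ)⁻¹ * ∑ i, c i ^ 2 * w i ^ 2 +
          2 * (n : ℝ)⁻¹ * ∑ i, c i ^ 2) := by
      intro w hw
      simp only [quad_step, hc, mul_zero, add_zero]
      have hmean := sum_sub_mean hn (fun i => c i * w i)
      have hsq := sum_sub_mean_sq hn (fun i => c i * w i)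
      rw [step_sq hn]
      · have hb : ∑ j, (2 * (c j * w j - (n : ℝ)⁻¹ * ∑ i, c i * w i) +
            c j * (1 - 2 * (n : ℝ)⁻¹)) ^ 2 ≤
            8 * ∑ i, c i ^ 2 * w i ^ 2 + 2 * ∑ i, c i ^ 2 := by
          calc _ ≤ ∑ j, (8 * (c j * w j - (n : ℝ)⁻¹ * ∑ i, c i * w i) ^ 2 + 2 * c j ^ 2) := by
                refine Finset.sum_le_sum fun j _ => ?_
                generalize (c j * w j - (n : ℝ)⁻¹ * ∑ i, c i * w i) = u
                have h1 : (c j * (1 - 2 * (n : ℝ)⁻¹)) ^ 2 ≤ c j ^ 2 := by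
                  rw [mul_pow]
                  refine mul_le_of_le_one_right (sq_nonneg _) ?_
                  nlinarith
                nlinarith [sq_nonneg (2 * u - c j * (1 - 2 * (n : ℝ)⁻¹))]
            _ ≤ _ := by
                rw [Finset.sum_add_distrib, ← Finset.mul_sum, ← Finset.mul_sum, hsq]
                simp only [mul_pow]
                have : 0 ≤ (n : ℝ)⁻¹ * (∑ i, c i * w i) ^ 2 := by positivity
                linarith
        nlinarith [mul_le_mul_of_nonneg_left hb hn0]
      · rw [Finset.sum_add_distrib, ← Finset.mul_sum, ← Finset.sum_mul, hc, hmean]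
        simp
    refine (walkE_mono n M _ _ this).trans ?_
    rw [walkE_add, walkE_add, walkE_mul, walkE_quad hn, walkE_const hn]
    have hM : (0 : ℝ) ≤ M := Nat.cast_nonneg M
    have h2 : (n : ℝ)⁻¹ * (1 - (n : ℝ)⁻¹) ≤ (n : ℝ)⁻¹ := by nlinarith
    have h3 : 8 * (n : ℝ)⁻¹ * (M * ((n : ℝ)⁻¹ * (1 - (n : ℝ)⁻¹)) * ∑ i, c i ^ 2) ≤
        8 * (n : ℝ)⁻¹ * (M * (n : ℝ)⁻¹ * ∑ i, c i ^ 2) := by gcongr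
    push_cast
    have h4 : 0 ≤ (n : ℝ)⁻¹ ^ 2 * ∑ i, c i ^ 2 := by positivity
    nlinarith

/-! ### Mean and variance of `F_A` with explicit errors -/

theorem expec_plProb {n : ℕ} (a : Fin n → ℕ) (M : ℕ) (T : (Fin n → ℕ) → ℝ)
    (Φ : (Fin n → ℝ) → ℝ) (h : ∀ z, T z = Φ (fun i => (z i : ℝ) - a i - M * (n : ℝ)⁻¹)) :
    expec (plProb n ((∑ i, a i) + M) a) T = walkE n M Φ := by
  simp only [expec, h]
  exact (hasSum_plProb n a M Φ).tsum_eq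

/-- The deviation `b_i = a_i - k/n` of a planting from the flat one, `k = ∑ a_i`. -/
noncomputable def dev {n : ℕ} (a : Fin n → ℕ) (i : Fin n) : ℝ :=
  (a i : ℝ) - (n : ℝ)⁻¹ * ∑ j, (a j : ℝ)

theorem sum_dev {n : ℕ} (hn : 0 < n) (a : Fin n → ℕ) : ∑ i, dev a i = 0 :=
  sum_sub_mean hn (fun i => (a i : ℝ))

theorem sum_dev_sq {n : ℕ} (hn : 0 < n) (a : Fin n → ℕ) :
    ∑ i, dev a i ^ 2 = n * plantV n a := by
  have hn' : (n : ℝ) ≠ 0 := by exact_mod_cast hn.ne'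
  have := sum_sub_mean_sq hn (fun i => (a i : ℝ))
  simp only [dev, this, plantV]
  field_simp

/-- The statistic `F_A` with `m` balls as a function of the centred counts
`w_i = y_i - (m - k)/n` of the unplanted balls, where `q_i = (n/m)(w_i + b_i)`. -/
noncomputable def centredF {n : ℕ} (m : ℕ) (a : Fin n → ℕ) (w : Fin n → ℝ) : ℝ :=
  ((n : ℝ) / m) ^ 2 * ((∑ i, a i * w i ^ 2 + 2 * ∑ i, (a i * dev a i) * w i) +
    ∑ i, a i * dev a i ^ 2)

theorem FStat_eq {n : ℕ} (hn : 0 < n) (a : Fin n → ℕ) (M : ℕ) (z : Fin n → ℕ) :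
    FStat n ((∑ i, a i) + M) a z =
      centredF ((∑ i, a i) + M) a (fun i => (z i : ℝ) - a i - M * (n : ℝ)⁻¹) := by
  have hn' : (n : ℝ) ≠ 0 := by exact_mod_cast hn.ne'
  rw [centredF, Finset.mul_sum, ← Finset.sum_add_distrib, ← Finset.sum_add_distrib,
    Finset.mul_sum, FStat]
  refine Finset.sum_congr rfl fun i _ => ?_
  have : (z i : ℝ) - (((∑ i, a i) + M : ℕ) : ℝ) / n =
      ((z i : ℝ) - a i - M * (n : ℝ)⁻¹) + dev a i := by
    unfold dev
    push_cast
    field_simp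
    ring
  rw [qStat, this]
  ring

theorem expec_FStat {n : ℕ} (hn : 0 < n) (a : Fin n → ℕ) (M : ℕ) :
    expec (plProb n ((∑ i, a i) + M) a) (FStat n ((∑ i, a i) + M) a) =
      ((n : ℝ) / ((∑ i, a i) + M : ℕ)) ^ 2 *
        (M * ((n : ℝ)⁻¹ * (1 - (n : ℝ)⁻¹)) * ∑ i, (a i : ℝ) + ∑ i, a i * dev a i ^ 2) := by
  rw [expec_plProb a M _ _ (FStat_eq hn a M)]
  unfold centredF
  rw [walkE_mul, walkE_add, walkE_add, walkE_mul,
    walkE_quad hn, walkE_linear hn, walkE_const hn]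
  ring

/-- The variance of `F_A` in terms of the three martingales that make up `F_A - E F_A`: the
collision statistic, the quadratic form with coefficients `b_i`, and a linear form. -/
theorem varOf_FStat {n : ℕ} (hn : 0 < n) (a : Fin n → ℕ) (M : ℕ) :
    varOf (plProb n ((∑ i, a i) + M) a) (FStat n ((∑ i, a i) + M) a) =
      ((n : ℝ) / ((∑ i, a i) + M : ℕ)) ^ 4 * walkE n M (fun w =>
        (((n : ℝ)⁻¹ * ∑ i, (a i : ℝ)) * (∑ i, w i ^ 2 - M * (1 - (n : ℝ)⁻¹)) +
          (∑ i, dev a i * w i ^ 2 + 2 * ∑ i, (a i * dev a i) * w i)) ^ 2) := by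
  have hn' : (n : ℝ) ≠ 0 := by exact_mod_cast hn.ne'
  rw [← walkE_mul]
  refine expec_plProb a M _ _ fun z => ?_
  rw [expec_FStat hn a M, FStat_eq hn a M]
  generalize (fun i => (z i : ℝ) - a i - M * (n : ℝ)⁻¹) = w
  have h : ∑ i, dev a i * w i ^ 2 =
      ∑ i, a i * w i ^ 2 - (n : ℝ)⁻¹ * (∑ i, (a i : ℝ)) * ∑ i, w i ^ 2 := by
    rw [Finset.mul_sum, ← Finset.sum_sub_distrib]
    exact Finset.sum_congr rfl fun i _ => by unfold dev; ring
  rw [h, centredF]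
  ring

/-- Young's inequality version of the triangle inequality for second moments. -/
theorem walkE_add_sq_le (n M : ℕ) (X Y : (Fin n → ℝ) → ℝ) (t : ℝ) (ht : 0 < t) :
    |walkE n M (fun w => (X w + Y w) ^ 2) - walkE n M (fun w => X w ^ 2)| ≤
      t * walkE n M (fun w => X w ^ 2) + (1 + t⁻¹) * walkE n M (fun w => Y w ^ 2) := by
  have key : ∀ x y : ℝ, 2 * |x * y| ≤ t * x ^ 2 + t⁻¹ * y ^ 2 := by
    intro x y
    have h : t * x ^ 2 + t⁻¹ * y ^ 2 - 2 * |x * y| = t⁻¹ * (t * |x| - |y|) ^ 2 := by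
      rw [abs_mul, sub_sq, mul_pow, sq_abs, sq_abs]
      field_simp
      ring
    have : 0 ≤ t⁻¹ * (t * |x| - |y|) ^ 2 := by positivity
    linarith
  have h1 := walkE_mono n M (fun w => (X w + Y w) ^ 2)
    (fun w => (1 + t) * X w ^ 2 + (1 + t⁻¹) * Y w ^ 2) fun w _ => by
      have := key (X w) (Y w)
      have := le_abs_self (X w * Y w)
      nlinarith
  have h2 := walkE_mono n M (fun w => (1 - t) * X w ^ 2 + (- (1 + t⁻¹)) * Y w ^ 2)
    (fun w => (X w + Y w) ^ 2) fun w _ => by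
      have := key (X w) (Y w)
      have := neg_abs_le (X w * Y w)
      have : 0 ≤ Y w ^ 2 := sq_nonneg _
      nlinarith
  rw [walkE_add, walkE_mul, walkE_mul] at h1 h2
  rw [abs_le]
  constructor <;> linarith

theorem sum_mul_dev_sq_le {n : ℕ} (a : Fin n → ℕ) :
    ∑ i, a i * dev a i ^ 2 ≤ ((n : ℝ)⁻¹ * ∑ i, (a i : ℝ) + √(∑ i, dev a i ^ 2)) *
      ∑ i, dev a i ^ 2 := by
  rw [Finset.mul_sum]
  refine Finset.sum_le_sum fun i _ => mul_le_mul_of_nonneg_right ?_ (sq_nonneg _)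
  have h : dev a i ≤ √(∑ i, dev a i ^ 2) :=
    Real.le_sqrt_of_sq_le
      (Finset.single_le_sum (f := fun i => dev a i ^ 2) (fun i _ => sq_nonneg _)
        (Finset.mem_univ i))
  unfold dev at h ⊢
  linarith

theorem sum_sq_mul_dev_le {n : ℕ} (a : Fin n → ℕ) :
    ∑ i, (a i * dev a i) ^ 2 ≤ 2 * (∑ i, dev a i ^ 2) ^ 2 +
      2 * ((n : ℝ)⁻¹ * ∑ i, (a i : ℝ)) ^ 2 * ∑ i, dev a i ^ 2 := by
  have h : ∀ i, (a i * dev a i) ^ 2 ≤ (2 * (∑ i, dev a i ^ 2) +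
      2 * ((n : ℝ)⁻¹ * ∑ i, (a i : ℝ)) ^ 2) * dev a i ^ 2 := by
    intro i
    rw [mul_pow]
    refine mul_le_mul_of_nonneg_right ?_ (sq_nonneg _)
    have h : dev a i ^ 2 ≤ ∑ i, dev a i ^ 2 :=
      Finset.single_le_sum (f := fun i => dev a i ^ 2) (fun i _ => sq_nonneg _)
        (Finset.mem_univ i)
    have h2 : (a i : ℝ) = dev a i + (n : ℝ)⁻¹ * ∑ i, (a i : ℝ) := by unfold dev; ring
    generalize (n : ℝ)⁻¹ * ∑ i, (a i : ℝ) = u at *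
    rw [h2]
    nlinarith [sq_nonneg (dev a i - u)]
  refine (Finset.sum_le_sum fun i _ => h i).trans_eq ?_
  rw [← Finset.mul_sum]
  ring

/-- Error bound for the mean, in terms of `x = n/m`, `κ = k/m` and `σ = n² V(A)/m`. -/
theorem expec_FStat_bound {n m k : ℕ} (hn : 0 < n) (hm : 0 < m) (a : Fin n → ℕ)
    (ha : ∑ i, a i = k) (hkm : k ≤ m) (x κ σ : ℝ) (hx : x = n / m) (hκ : κ = k / m)
    (hσ : σ = n ^ 2 * plantV n a / m) :
    |expec (plProb n m a) (FStat n m a) - ((k : ℝ) * n / m - (k : ℝ) ^ 2 * n / (m : ℝ) ^ 2)| ≤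
      κ + σ * κ + σ * √σ * √x := by
  have hn' : (0 : ℝ) < n := by exact_mod_cast hn
  have hm' : (0 : ℝ) < m := by exact_mod_cast hm
  have hkm' : (k : ℝ) ≤ m := by exact_mod_cast hkm
  obtain ⟨M, rfl⟩ := Nat.exists_eq_add_of_le hkm
  subst ha
  have hMe : (M : ℝ) = ((∑ i, a i + M : ℕ) : ℝ) - ((∑ i, a i : ℕ) : ℝ) := by push_cast; ring
  rw [expec_FStat hn a M]
  have hS := sum_dev_sq hn a
  have hle := sum_mul_dev_sq_le a
  have hnn : 0 ≤ ∑ i, a i * dev a i ^ 2 :=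
    Finset.sum_nonneg fun i _ => mul_nonneg (Nat.cast_nonneg _) (sq_nonneg _)
  have hS0 : 0 ≤ ∑ i, dev a i ^ 2 := Finset.sum_nonneg fun i _ => sq_nonneg _
  rw [hMe]
  have hksum : ∑ i, (a i : ℝ) = ((∑ i, a i : ℕ) : ℝ) := by push_cast; rfl
  rw [hksum] at hle ⊢
  have hk0 : (0 : ℝ) ≤ ((∑ i, a i : ℕ) : ℝ) := Nat.cast_nonneg _
  generalize ((∑ i, a i + M : ℕ) : ℝ) = m at *
  generalize ((∑ i, a i : ℕ) : ℝ) = k at *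
  generalize ∑ i, a i * dev a i ^ 2 = B at *
  have hσ' : σ = x * ∑ i, dev a i ^ 2 := by
    rw [hσ, hx, hS]; field_simp
  generalize ∑ i, dev a i ^ 2 = S at *
  have hx0 : 0 ≤ x := by rw [hx]; positivity
  have hκ0 : 0 ≤ κ := by rw [hκ]; positivity
  have hκ1 : κ ≤ 1 := by rw [hκ]; exact div_le_one_of_le₀ hkm' hm'.le
  have e : ((n : ℝ) / m) ^ 2 * ((m - k) * ((n : ℝ)⁻¹ * (1 - (n : ℝ)⁻¹)) * k + B) -
      (k * n / m - k ^ 2 * n / m ^ 2) = -(κ * (1 - κ)) + x ^ 2 * B := by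
    rw [hx, hκ]
    field_simp
    ring
  rw [e]
  have h3 : x ^ 2 * B ≤ σ * κ + σ * √σ * √x := by
    calc x ^ 2 * B ≤ x ^ 2 * (((n : ℝ)⁻¹ * k + √S) * S) := by gcongr
      _ = σ * κ + σ * √σ * √x := by
        have h5 : x * ((n : ℝ)⁻¹ * k) = κ := by rw [hx, hκ]; field_simp
        have h6 : √x * √x = x := Real.mul_self_sqrt hx0
        rw [hσ', Real.sqrt_mul hx0]
        linear_combination x * S * h5 - x * S * √S * h6
  have h4 : 0 ≤ x ^ 2 * B := by positivity
  rw [abs_le]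
  constructor <;> nlinarith

/-- Error bound for the variance: the collision statistic contributes the main term, and `t` is
a free parameter used to absorb the cross terms. -/
theorem varOf_FStat_bound {n m k : ℕ} (hn : 0 < n) (hm : 0 < m) (a : Fin n → ℕ)
    (ha : ∑ i, a i = k) (hkm : k ≤ m) (x κ σ r t : ℝ) (ht : 0 < t) (hx : x = n / m)
    (hκ : κ = k / m) (hσ : σ = n ^ 2 * plantV n a / m) (hr : r ^ 2 = k ^ 2 * n / m ^ 2) :
    |varOf (plProb n m a) (FStat n m a) - 2 * r ^ 2 * ((1 - κ) * (1 - κ - (m : ℝ)⁻¹) *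
      (1 - (n : ℝ)⁻¹))| ≤ t * (2 * r ^ 2) + (1 + t⁻¹) *
        (8 * x * σ + 4 * x ^ 2 * σ + 16 * x * σ ^ 2 + 16 * σ * κ ^ 2) := by
  have hn' : (0 : ℝ) < n := by exact_mod_cast hn
  have hm' : (0 : ℝ) < m := by exact_mod_cast hm
  have hm1 : (1 : ℝ) ≤ m := by exact_mod_cast hm
  have hn1 : (1 : ℝ) ≤ n := by exact_mod_cast hn
  have hkm' : (k : ℝ) ≤ m := by exact_mod_cast hkm
  obtain ⟨M, rfl⟩ := Nat.exists_eq_add_of_le hkm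
  subst ha
  have hMe : (M : ℝ) = ((∑ i, a i + M : ℕ) : ℝ) - ((∑ i, a i : ℕ) : ℝ) := by push_cast; ring
  rw [varOf_FStat hn a M]
  have hY : walkE n M (fun w => (∑ i, dev a i * w i ^ 2 + 2 * ∑ i, (a i * dev a i) * w i) ^ 2) ≤
      2 * walkE n M (fun w => (∑ i, dev a i * w i ^ 2) ^ 2) +
      8 * walkE n M (fun w => (∑ i, (a i * dev a i) * w i) ^ 2) := by
    rw [← walkE_mul, ← walkE_mul, ← walkE_add]
    refine walkE_mono n M _ _ fun w _ => ?_
    nlinarith [sq_nonneg (∑ i, dev a i * w i ^ 2 - 2 * ∑ i, (a i * dev a i) * w i)]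
  have hR := walkE_quad_sq_le hn M (dev a) (sum_dev hn a)
  have hL : walkE n M (fun w => (∑ i, (a i * dev a i) * w i) ^ 2) ≤
      M * (n : ℝ)⁻¹ * ∑ i, (a i * dev a i) ^ 2 := by
    rw [walkE_linear_sq hn, mul_assoc]
    gcongr
    have : 0 ≤ (n : ℝ)⁻¹ * (∑ i, a i * dev a i) ^ 2 := by positivity
    linarith
  have hC := sum_sq_mul_dev_le a
  have hmain := walkE_add_sq_le n M
    (fun w => ((n : ℝ)⁻¹ * ∑ i, (a i : ℝ)) * (∑ i, w i ^ 2 - M * (1 - (n : ℝ)⁻¹)))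
    (fun w => ∑ i, dev a i * w i ^ 2 + 2 * ∑ i, (a i * dev a i) * w i) t ht
  have hX : walkE n M (fun w => (((n : ℝ)⁻¹ * ∑ i, (a i : ℝ)) *
      (∑ i, w i ^ 2 - M * (1 - (n : ℝ)⁻¹))) ^ 2) =
      ((n : ℝ)⁻¹ * ∑ i, (a i : ℝ)) ^ 2 * (2 * M * (M - 1) * (n : ℝ)⁻¹ * (1 - (n : ℝ)⁻¹)) := by
    simp only [mul_pow _ (_ - _)]
    rw [walkE_mul, walkE_normSq_var hn]
  rw [hX] at hmain
  have hS := sum_dev_sq hn a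
  have hS0 : 0 ≤ ∑ i, dev a i ^ 2 := Finset.sum_nonneg fun i _ => sq_nonneg _
  have hksum : ∑ i, (a i : ℝ) = ((∑ i, a i : ℕ) : ℝ) := by push_cast; rfl
  rw [hksum] at hmain hC ⊢
  have hk0 : (0 : ℝ) ≤ ((∑ i, a i : ℕ) : ℝ) := Nat.cast_nonneg _
  have hM0 : (0 : ℝ) ≤ M := Nat.cast_nonneg _
  generalize walkE n M (fun w => (∑ i, dev a i * w i ^ 2 +
    2 * ∑ i, (a i * dev a i) * w i) ^ 2) = EY at *
  generalize walkE n M (fun w => (∑ i, dev a i * w i ^ 2) ^ 2) = ER at *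
  generalize walkE n M (fun w => (∑ i, (a i * dev a i) * w i) ^ 2) = EL at *
  generalize walkE n M _ = EV at *
  generalize ∑ i, (a i * dev a i) ^ 2 = C at *
  generalize ((∑ i, a i + M : ℕ) : ℝ) = m at *
  generalize ((∑ i, a i : ℕ) : ℝ) = k at *
  generalize (M : ℝ) = N at *
  have hσ' : σ = x * ∑ i, dev a i ^ 2 := by
    rw [hσ, hx, hS]; field_simp
  generalize ∑ i, dev a i ^ 2 = S at *
  rw [← hx]
  have hx0 : 0 ≤ x := by rw [hx]; positivity
  have hκ0 : 0 ≤ κ := by rw [hκ]; positivity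
  have hκ1 : κ ≤ 1 := by rw [hκ]; exact div_le_one_of_le₀ hkm' hm'.le
  have hxk : x * ((n : ℝ)⁻¹ * k) = κ := by rw [hx, hκ]; field_simp
  have hxN0 : 0 ≤ x * (N * (n : ℝ)⁻¹) := by positivity
  have hxN : x * (N * (n : ℝ)⁻¹) ≤ 1 := by
    have : x * (N * (n : ℝ)⁻¹) = 1 - κ := by rw [hx, hκ, hMe]; field_simp
    linarith
  have hEX : x ^ 4 * (((n : ℝ)⁻¹ * k) ^ 2 * (2 * N * (N - 1) * (n : ℝ)⁻¹ * (1 - (n : ℝ)⁻¹))) =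
      2 * r ^ 2 * ((1 - κ) * (1 - κ - m⁻¹) * (1 - (n : ℝ)⁻¹)) := by
    rw [hr, hx, hκ, hMe]
    field_simp
  have hEXle : 2 * r ^ 2 * ((1 - κ) * (1 - κ - m⁻¹) * (1 - (n : ℝ)⁻¹)) ≤ 2 * r ^ 2 := by
    have hi1 : 0 ≤ (n : ℝ)⁻¹ ∧ (n : ℝ)⁻¹ ≤ 1 := ⟨by positivity, inv_le_one_of_one_le₀ hn1⟩
    have hi2 : 0 ≤ m⁻¹ := by positivity
    refine mul_le_of_le_one_right (by positivity) ?_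
    have h1 : (1 - κ) * (1 - κ - m⁻¹) ≤ 1 := by
      have hp := mul_nonneg (sub_nonneg.2 hκ1) hi2
      have hq : (1 - κ) ^ 2 ≤ 1 := pow_le_one₀ (sub_nonneg.2 hκ1) (by linarith)
      have he : (1 - κ) * (1 - κ - m⁻¹) = (1 - κ) ^ 2 - (1 - κ) * m⁻¹ := by ring
      linarith
    linarith [mul_le_mul_of_nonneg_right h1 (sub_nonneg.2 hi1.2)]
  have hEY : x ^ 4 * EY ≤ 8 * x * σ + 4 * x ^ 2 * σ + 16 * x * σ ^ 2 + 16 * σ * κ ^ 2 := by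
    set g := N * (n : ℝ)⁻¹ with hg
    set u := (n : ℝ)⁻¹ * k with hu
    have hg0 : 0 ≤ g := by positivity
    have hu0 : 0 ≤ u := by positivity
    have h1 : EY ≤ 2 * ((4 * g ^ 2 + 2 * g) * S) + 8 * (g * (2 * S ^ 2 + 2 * u ^ 2 * S)) := by
      have := mul_le_mul_of_nonneg_left hC hg0
      linarith
    calc x ^ 4 * EY ≤ x ^ 4 * (2 * ((4 * g ^ 2 + 2 * g) * S) +
          8 * (g * (2 * S ^ 2 + 2 * u ^ 2 * S))) := by gcongr
      _ = 8 * x * (x * S) * (x * g) ^ 2 + 4 * x ^ 2 * (x * S) * (x * g) +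
          16 * x * (x * S) ^ 2 * (x * g) + 16 * (x * S) * (x * u) ^ 2 * (x * g) := by ring
      _ ≤ 8 * x * (x * S) * 1 ^ 2 + 4 * x ^ 2 * (x * S) * 1 +
          16 * x * (x * S) ^ 2 * 1 + 16 * (x * S) * (x * u) ^ 2 * 1 := by gcongr
      _ = _ := by rw [hσ', hxk]; ring
  have hx4 : 0 ≤ x ^ 4 := by positivity
  rw [← hEX, ← mul_sub, abs_mul, abs_of_nonneg hx4]
  have hti : 0 ≤ 1 + t⁻¹ := by positivity
  have hA := mul_le_mul_of_nonneg_left hmain hx4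
  have hB := mul_le_mul_of_nonneg_left hEY hti
  have hD := mul_le_mul_of_nonneg_left (hEX.trans_le hEXle) ht.le
  refine hA.trans ?_
  linarith

/-! ### Asymptotics in the three regimes -/

/-- The two scales common to the three regimes: `k√n/m` and `n² V(A)/m` both converge. -/
theorem regime_scales (A : (n : ℕ) → Fin n → ℕ) (m k : ℕ → ℕ)
    (hk : Tendsto (fun n : ℕ => (k n : ℝ) / Real.sqrt n) atTop atTop)
    (hreg : SomeRegime A m k) :
    ∃ r₀ σ₀ : ℝ, Tendsto (fun n : ℕ => (k n : ℝ) * √n / m n) atTop (𝓝 r₀) ∧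
      Tendsto (fun n : ℕ => (n : ℝ) ^ 2 * plantV n (A n) / m n) atTop (𝓝 σ₀) := by
  have hpow : ∀ n : ℕ, (n : ℝ) ^ ((3 : ℝ) / 2) * √n = (n : ℝ) ^ 2 := by
    intro n
    rw [Real.sqrt_eq_rpow, ← Real.rpow_add_of_nonneg (Nat.cast_nonneg n) (by norm_num)
      (by norm_num), ← Real.rpow_natCast]
    norm_num
  have hflat : ∀ lam c : ℝ, 0 < c → IntermediateRegime A m k lam c →
      ∃ r₀ σ₀ : ℝ, Tendsto (fun n : ℕ => (k n : ℝ) * √n / m n) atTop (𝓝 r₀) ∧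
        Tendsto (fun n : ℕ => (n : ℝ) ^ 2 * plantV n (A n) / m n) atTop (𝓝 σ₀) := by
    rintro lam c hc ⟨h1, h2⟩
    have h3 : Tendsto (fun n : ℕ => (k n : ℝ) * √n / m n) atTop (𝓝 c⁻¹) := by
      simpa only [inv_div] using h2.inv₀ hc.ne'
    refine ⟨c⁻¹, lam * c⁻¹, h3, (h1.mul h3).congr' ?_⟩
    filter_upwards [hk.eventually_gt_atTop 0] with n hn
    have hk0 : (k n : ℝ) ≠ 0 := fun h => by simp [h] at hn
    rw [← hpow]
    field_simp
  rcases hreg with ⟨c, hc, h⟩ | ⟨lam, c, -, hc, h⟩ | ⟨c, hc, h1, h2⟩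
  · exact hflat 0 c hc h
  · exact hflat lam c hc h
  · have h3 : Tendsto (fun n : ℕ => (n : ℝ) ^ 2 * plantV n (A n) / m n) atTop (𝓝 c⁻¹) := by
      simpa only [inv_div, mul_comm] using h2.inv₀ hc.ne'
    refine ⟨c⁻¹ * 0, c⁻¹, (h3.mul h1.inv_tendsto_atTop).congr' ?_, h3⟩
    filter_upwards [h1.eventually_gt_atTop 0] with n hn
    have hV : plantV n (A n) ≠ 0 := fun h => by simp [h] at hn
    have hk0 : (k n : ℝ) ≠ 0 := fun h => by simp [h] at hn
    have hp : (n : ℝ) ^ ((3 : ℝ) / 2) ≠ 0 := fun h => by simp [h] at hn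
    simp only [Pi.inv_apply]
    rw [← hpow]
    field_simp

/-- in all three regimes, `E_PL[F_A] = kn/m − k²n/m² + o(1)` and
`Var_PL[F_A] = 2k²n/m² + o(1)`. -/
theorem fstat_pl_moments (A : (n : ℕ) → Fin n → ℕ) (m k : ℕ → ℕ)
    (hka : ∀ n, ∑ i, A n i = k n) (hkm : ∀ n, k n ≤ m n)
    (hk : Tendsto (fun n : ℕ => (k n : ℝ) / Real.sqrt n) atTop atTop)
    (hreg : SomeRegime A m k) :
    Tendsto (fun n : ℕ => expec (plProb n (m n) (A n)) (FStat n (m n) (A n)) -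
        ((k n : ℝ) * n / (m n) - (k n : ℝ) ^ 2 * n / (m n : ℝ) ^ 2)) atTop (𝓝 0) ∧
    Tendsto (fun n : ℕ => varOf (plProb n (m n) (A n)) (FStat n (m n) (A n)) -
        2 * (k n : ℝ) ^ 2 * n / (m n : ℝ) ^ 2) atTop (𝓝 0) := by
  obtain ⟨r₀, σ₀, hr, hσ⟩ := regime_scales A m k hk hreg
  have hn0 : ∀ᶠ n : ℕ in atTop, 0 < n := eventually_gt_atTop 0
  have hk0 : ∀ᶠ n : ℕ in atTop, 0 < k n := by
    filter_upwards [hk.eventually_gt_atTop 0] with n hn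
    rcases Nat.eq_zero_or_pos (k n) with h | h
    · simp [h] at hn
    · exact h
  have hsq : Tendsto (fun n : ℕ => (√(n : ℝ))⁻¹) atTop (𝓝 0) :=
    (Real.tendsto_sqrt_atTop.comp tendsto_natCast_atTop_atTop).inv_tendsto_atTop
  have hninv : Tendsto (fun n : ℕ => ((n : ℝ))⁻¹) atTop (𝓝 0) :=
    tendsto_natCast_atTop_atTop.inv_tendsto_atTop
  have hκ : Tendsto (fun n : ℕ => (k n : ℝ) / m n) atTop (𝓝 0) := by
    have := hr.mul hsq
    rw [mul_zero] at this
    refine this.congr' ?_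
    filter_upwards [hn0] with n hn
    have : √(n : ℝ) ≠ 0 := by positivity
    field_simp
  have hx : Tendsto (fun n : ℕ => (n : ℝ) / m n) atTop (𝓝 0) := by
    have := hr.mul hk.inv_tendsto_atTop
    rw [mul_zero] at this
    refine this.congr' ?_
    filter_upwards [hk0] with n hn
    have hk' : (k n : ℝ) ≠ 0 := by positivity
    have h2 : √(n : ℝ) * √(n : ℝ) = n := Real.mul_self_sqrt (Nat.cast_nonneg n)
    simp only [Pi.inv_apply, inv_div]
    conv_rhs => rw [← h2]
    field_simp
  have hminv : Tendsto (fun n : ℕ => ((m n : ℝ))⁻¹) atTop (𝓝 0) := by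
    have := hx.mul hninv
    rw [mul_zero] at this
    refine this.congr' ?_
    filter_upwards [hn0] with n hn
    have : (n : ℝ) ≠ 0 := by positivity
    field_simp
  have hr2 : ∀ n : ℕ, ((k n : ℝ) * √n / m n) ^ 2 = (k n : ℝ) ^ 2 * n / (m n : ℝ) ^ 2 := by
    intro n
    rw [div_pow, mul_pow, Real.sq_sqrt (Nat.cast_nonneg n)]
  constructor
  · have hlim := (hκ.add (hσ.mul hκ)).add ((hσ.mul hσ.sqrt).mul hx.sqrt)
    simp only [mul_zero, Real.sqrt_zero, add_zero] at hlim
    refine squeeze_zero_norm' ?_ hlim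
    filter_upwards [hn0, hk0] with n hn hkn
    exact expec_FStat_bound hn (hkn.trans_le (hkm n)) (A n) (hka n) (hkm n) _ _ _ rfl rfl rfl
  · set ε : ℕ → ℝ := fun n => 8 * ((n : ℝ) / m n) * ((n : ℝ) ^ 2 * plantV n (A n) / m n) +
      4 * ((n : ℝ) / m n) ^ 2 * ((n : ℝ) ^ 2 * plantV n (A n) / m n) +
      16 * ((n : ℝ) / m n) * ((n : ℝ) ^ 2 * plantV n (A n) / m n) ^ 2 +
      16 * ((n : ℝ) ^ 2 * plantV n (A n) / m n) * ((k n : ℝ) / m n) ^ 2 with hε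
    have hεlim : Tendsto ε atTop (𝓝 0) := by
      have := ((((hx.const_mul 8).mul hσ).add (((hx.pow 2).const_mul 4).mul hσ)).add
        ((hx.const_mul 16).mul (hσ.pow 2))).add ((hσ.const_mul 16).mul (hκ.pow 2))
      simpa using this
    -- `t` dominates `√ε`, and is positive even where `ε` vanishes.
    set t : ℕ → ℝ := fun n => √(|ε n| + (n : ℝ)⁻¹) with ht
    have htlim : Tendsto t atTop (𝓝 0) := by
      have := (hεlim.abs.add hninv).sqrt
      simpa using this
    have herr : Tendsto (fun n : ℕ => t n * (2 * ((k n : ℝ) * √n / m n) ^ 2) + (ε n + t n))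
        atTop (𝓝 0) := by
      have := (htlim.mul ((hr.pow 2).const_mul 2)).add (hεlim.add htlim)
      simpa using this
    have hmain : Tendsto (fun n : ℕ => 2 * ((k n : ℝ) * √n / m n) ^ 2 *
        ((1 - (k n : ℝ) / m n) * (1 - (k n : ℝ) / m n - (m n : ℝ)⁻¹) * (1 - (n : ℝ)⁻¹) - 1))
        atTop (𝓝 0) := by
      have := ((hr.pow 2).const_mul 2).mul (((((hκ.const_sub 1).mul
        ((hκ.const_sub 1).sub hminv)).mul (hninv.const_sub 1))).sub_const 1)
      simpa using this
    have hdiff : Tendsto (fun n : ℕ => varOf (plProb n (m n) (A n)) (FStat n (m n) (A n)) -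
        2 * ((k n : ℝ) * √n / m n) ^ 2 * ((1 - (k n : ℝ) / m n) *
          (1 - (k n : ℝ) / m n - (m n : ℝ)⁻¹) * (1 - (n : ℝ)⁻¹))) atTop (𝓝 0) := by
      refine squeeze_zero_norm' ?_ herr
      filter_upwards [hn0, hk0] with n hn hkn
      have hinv : (0 : ℝ) < (n : ℝ)⁻¹ := by positivity
      have harg : 0 < |ε n| + (n : ℝ)⁻¹ := by positivity
      have htpos : 0 < t n := Real.sqrt_pos.2 harg
      refine (varOf_FStat_bound hn (hkn.trans_le (hkm n)) (A n) (hka n) (hkm n) _ _ _ _ (t n)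
        htpos rfl rfl rfl (hr2 n)).trans ?_
      have h1 : ε n ≤ t n ^ 2 := by
        rw [ht]
        simp only
        rw [Real.sq_sqrt harg.le]
        linarith [le_abs_self (ε n)]
      have h2 : (t n)⁻¹ * ε n ≤ t n := by
        rw [inv_mul_le_iff₀ htpos]
        nlinarith
      have h3 : (1 + (t n)⁻¹) * ε n ≤ ε n + t n := by linarith
      linarith
    have := hdiff.add hmain
    rw [add_zero] at this
    refine this.congr fun n => ?_
    have h2 : 2 * (k n : ℝ) ^ 2 * n / (m n : ℝ) ^ 2 = 2 * ((k n : ℝ) * √n / m n) ^ 2 := by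
      rw [hr2]; ring
    rw [h2]
    ring
end
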